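/- arXiv:2601.16585 — 2 statements merged into one kernel-verified Lean document; each statement's English description precedes it below -/
import Mathlib

section
/- (Supplementary Lemma 2.) Suppose (B1)–(B4) hold. Then the generic posterior mean β̂_n is a consistent estimator of β⁰_n in the sense that E‖β̂_n − β⁰_n‖² = O_p(p_n/n) → 0 (the expectation taken over the Gaussian error distribution, conditional on Δ_n), and moreover ‖β̂_n − β⁰_n‖² ≍ p_n/n, i.e. ‖β̂_n − β⁰_n‖² is both O_p(p_n/n) and Ω_p(p_n/n). -/
open MeasureTheory ProbabilityTheory Matrix Filter Asymptotics

noncomputable section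

/-- Euclidean norm of a finite real vector. -/
def enorm2 {ι : Type*} [Fintype ι] (v : ι → ℝ) : ℝ := Real.sqrt (∑ i, v i ^ 2)

/-- `A_n = O_p(B_n)`: for every `γ > 0` there are `ζ_γ > 0` and `N_γ` with
`P(|A_n| > ζ_γ B_n) < γ` for all `n ≥ N_γ`. -/
def IsBigOP {Ω : ℕ → Type*} [∀ n, MeasurableSpace (Ω n)]
    (P : (n : ℕ) → Measure (Ω n)) (A : (n : ℕ) → Ω n → ℝ) (B : ℕ → ℝ) : Prop :=
  ∀ γ : ℝ, 0 < γ → ∃ ζ : ℝ, 0 < ζ ∧ ∃ N : ℕ, ∀ n, N ≤ n →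
    ((P n) {ω | ζ * B n < |A n ω|}).toReal < γ

/-- `A_n = Ω_p(B_n)`: there exist `ζ, γ > 0` and `N` with
`P(|A_n| ≥ ζ B_n) ≥ γ` for all `n ≥ N`. -/
def IsOmegaP {Ω : ℕ → Type*} [∀ n, MeasurableSpace (Ω n)]
    (P : (n : ℕ) → Measure (Ω n)) (A : (n : ℕ) → Ω n → ℝ) (B : ℕ → ℝ) : Prop :=
  ∃ ζ γ : ℝ, 0 < ζ ∧ 0 < γ ∧ ∃ N : ℕ, ∀ n, N ≤ n →
    γ ≤ ((P n) {ω | ζ * B n ≤ |A n ω|}).toReal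

/-- `A_n ≍ B_n`: both `O_p` and `Ω_p`. -/
def IsThetaP {Ω : ℕ → Type*} [∀ n, MeasurableSpace (Ω n)]
    (P : (n : ℕ) → Measure (Ω n)) (A : (n : ℕ) → Ω n → ℝ) (B : ℕ → ℝ) : Prop :=
  IsBigOP P A B ∧ IsOmegaP P A B

/-- `A_n = o_p(B_n)`: `P(|A_n| ≥ γ B_n) → 0` for every `γ > 0`. -/
def IsLittleOP {Ω : ℕ → Type*} [∀ n, MeasurableSpace (Ω n)]
    (P : (n : ℕ) → Measure (Ω n)) (A : (n : ℕ) → Ω n → ℝ) (B : ℕ → ℝ) : Prop :=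
  ∀ γ : ℝ, 0 < γ →
    Tendsto (fun n => ((P n) {ω | γ * B n ≤ |A n ω|}).toReal) atTop (nhds 0)

/-- Convergence in probability to a constant `c`. -/
def TendstoInP {Ω : ℕ → Type*} [∀ n, MeasurableSpace (Ω n)]
    (P : (n : ℕ) → Measure (Ω n)) (A : (n : ℕ) → Ω n → ℝ) (c : ℝ) : Prop :=
  ∀ γ : ℝ, 0 < γ →
    Tendsto (fun n => ((P n) {ω | γ ≤ |A n ω - c|}).toReal) atTop (nhds 0)

/-- `Z` has (under `P`) the multivariate Gaussian distribution with mean vector `m` and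
covariance matrix `V`, characterized through one-dimensional projections. -/
def IsMvGaussian {Ω : Type*} [MeasurableSpace Ω] (P : Measure Ω)
    {ι : Type*} [Fintype ι] (Z : Ω → ι → ℝ) (m : ι → ℝ) (V : Matrix ι ι ℝ) : Prop :=
  ∀ a : ι → ℝ,
    Measure.map (fun ω => ∑ i, a i * Z ω i) P
      = gaussianReal (∑ i, a i * m i) (Real.toNNReal (a ⬝ᵥ (V *ᵥ a)))

end

/-!
Divide the normal equations by `n`. With probability tending to one the spectrum of
`S = (XᵀX + Δ)/n` lies in `[d_min, d_max + 1]`, because `max_g δ_g = o_p(√n)` makes `Δ/n`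
negligible. The error of the posterior mean is then `-S⁻¹(Δ/n)β⁰ + S⁻¹(n⁻¹Xᵀε)`. The squared bias is
at most of order `(max_g δ_g/n)² ‖β⁰‖² = o_p(1/n) · O(p_n)`. The coordinates of the noise `n⁻¹Xᵀε`
are Gaussian with variances of exact order `1/n`, since centering the errors is invisible to the
centered columns of `X`. They are dependent, but first moments suffice: Markov's inequality bounds
`‖n⁻¹Xᵀε‖²` above by `p_n/n`, and the reverse Markov inequality, applied to the sum of the squares
truncated at their common scale, bounds it below.
-/

section EuclideanNorm

variable {ι : Type*} [Fintype ι]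

lemma enorm2_eq_norm (v : ι → ℝ) : enorm2 v = ‖WithLp.toLp 2 v‖ := by
  simp [enorm2, EuclideanSpace.norm_eq]

lemma enorm2_nonneg (v : ι → ℝ) : 0 ≤ enorm2 v :=
  Real.sqrt_nonneg _

lemma enorm2_sq_eq_sum (v : ι → ℝ) : enorm2 v ^ 2 = ∑ i, v i ^ 2 :=
  Real.sq_sqrt (Finset.sum_nonneg fun _ _ => sq_nonneg _)

lemma enorm2_sq_eq_dotProduct (v : ι → ℝ) : enorm2 v ^ 2 = v ⬝ᵥ v := by
  rw [enorm2_sq_eq_sum]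
  simp only [dotProduct, sq]

lemma enorm2_neg (v : ι → ℝ) : enorm2 (-v) = enorm2 v := by
  simp only [enorm2_eq_norm, WithLp.toLp_neg, norm_neg]

lemma enorm2_add_sq_le (v w : ι → ℝ) :
    enorm2 (v + w) ^ 2 ≤ 2 * (enorm2 v ^ 2 + enorm2 w ^ 2) := by
  simp only [enorm2_eq_norm, WithLp.toLp_add]
  exact (pow_le_pow_left₀ (norm_nonneg _) (norm_add_le _ _) 2).trans add_sq_le

lemma dotProduct_le_enorm2_mul_enorm2 (v w : ι → ℝ) : v ⬝ᵥ w ≤ enorm2 v * enorm2 w := by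
  rw [dotProduct_comm]
  simpa only [enorm2_eq_norm, EuclideanSpace.inner_eq_star_dotProduct, star_trivial] using
    real_inner_le_norm (WithLp.toLp 2 v) (WithLp.toLp 2 w)

lemma enorm2_sq_le_mul_card_of_blocks {G : Type*} [Fintype G] {p : G → ℕ}
    {β : (g : G) × Fin (p g) → ℝ} {U : ℝ} (hβ : ∀ g, enorm2 (fun j => β ⟨g, j⟩) ≤ U) :
    enorm2 β ^ 2 ≤ U ^ 2 * Fintype.card ((g : G) × Fin (p g)) := by
  simp only [Fintype.card_sigma, Fintype.card_fin, Nat.cast_sum]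
  rw [enorm2_sq_eq_sum, Fintype.sum_sigma, Finset.mul_sum]
  refine Finset.sum_le_sum fun g _ => ?_
  rw [← enorm2_sq_eq_sum fun j => β ⟨g, j⟩]
  rcases (p g).eq_zero_or_pos with hp | hp
  · have : IsEmpty (Fin (p g)) := by rw [hp]; infer_instance
    simp [enorm2_sq_eq_sum, hp]
  · exact (pow_le_pow_left₀ (enorm2_nonneg _) (hβ g) 2).trans
      (le_mul_of_one_le_right (sq_nonneg U) (mod_cast hp))

end EuclideanNorm

section LoewnerOrder

open scoped MatrixOrder

variable {ι : Type*}

lemma diag_apply_mono {A B : Matrix ι ι ℝ} (h : A ≤ B) (i : ι) : A i i ≤ B i i :=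
  sub_nonneg.1 (Matrix.le_iff.1 h).diag_nonneg

lemma smul_one_le_smul_one [DecidableEq ι] {a b : ℝ} (h : a ≤ b) :
    a • (1 : Matrix ι ι ℝ) ≤ b • 1 := by
  rw [smul_one_eq_diagonal, smul_one_eq_diagonal, Matrix.le_iff, diagonal_sub]
  exact .diagonal fun _ => sub_nonneg.2 h

lemma diagonal_mem_Icc [DecidableEq ι] {d : ι → ℝ} {t : ℝ} (h0 : ∀ i, 0 ≤ d i) (ht : ∀ i, d i ≤ t) :
    diagonal d ∈ Set.Icc 0 (t • (1 : Matrix ι ι ℝ)) := by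
  refine ⟨Matrix.nonneg_iff_posSemidef.2 (.diagonal h0), ?_⟩
  rw [smul_one_eq_diagonal, Matrix.le_iff, diagonal_sub]
  exact .diagonal fun i => sub_nonneg.2 (ht i)

lemma smul_mem_Icc_smul_one [DecidableEq ι] {D : Matrix ι ι ℝ} {c t : ℝ} (hc : 0 ≤ c)
    (hD : D ∈ Set.Icc 0 (t • (1 : Matrix ι ι ℝ))) :
    c • D ∈ Set.Icc 0 ((c * t) • (1 : Matrix ι ι ℝ)) := by
  refine ⟨Matrix.nonneg_iff_posSemidef.2 ((Matrix.nonneg_iff_posSemidef.1 hD.1).smul hc), ?_⟩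
  rw [mul_smul, Matrix.le_iff, ← smul_sub]
  exact (Matrix.le_iff.1 hD.2).smul hc

variable [Fintype ι]

lemma dotProduct_mulVec_mono {A B : Matrix ι ι ℝ} (h : A ≤ B) (v : ι → ℝ) :
    v ⬝ᵥ A *ᵥ v ≤ v ⬝ᵥ B *ᵥ v := by
  have := (Matrix.le_iff.1 h).dotProduct_mulVec_nonneg v
  rwa [star_trivial, sub_mulVec, dotProduct_sub, sub_nonneg] at this

lemma sq_dotProduct_mulVec_le {S : Matrix ι ι ℝ} (hS : 0 ≤ S) (u v : ι → ℝ) :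
    (u ⬝ᵥ S *ᵥ v) ^ 2 ≤ (u ⬝ᵥ S *ᵥ u) * (v ⬝ᵥ S *ᵥ v) := by
  classical
  have hS' := Matrix.nonneg_iff_posSemidef.1 hS
  have hsymm : Sᵀ = S := by
    simpa only [conjTranspose_eq_transpose_of_trivial] using hS'.isHermitian.eq
  have := LinearMap.BilinForm.apply_sq_le_of_symm (toBilin' S)
    (fun x => by simpa [toBilin'_apply'] using hS'.dotProduct_mulVec_nonneg x)
    ⟨fun x y => by
      simp only [toBilin'_apply', RingHom.id_apply]
      rw [dotProduct_mulVec, ← mulVec_transpose, hsymm, dotProduct_comm]⟩ u v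
  simpa only [toBilin'_apply'] using this

variable [DecidableEq ι]

lemma dotProduct_smul_one_mulVec (c : ℝ) (v : ι → ℝ) :
    v ⬝ᵥ (c • (1 : Matrix ι ι ℝ)) *ᵥ v = c * enorm2 v ^ 2 := by
  rw [smul_mulVec, one_mulVec, dotProduct_smul, smul_eq_mul, enorm2_sq_eq_dotProduct]

lemma smul_one_le_iff {S : Matrix ι ι ℝ} (hS : S.IsHermitian) {a : ℝ} :
    a • 1 ≤ S ↔ ∀ v, a * enorm2 v ^ 2 ≤ v ⬝ᵥ S *ᵥ v := by
  simp only [← dotProduct_smul_one_mulVec]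
  refine ⟨fun h v => dotProduct_mulVec_mono h v, fun h => .of_dotProduct_mulVec_nonneg
    (hS.sub (isHermitian_one.smul (.all a))) fun v => ?_⟩
  rw [star_trivial, sub_mulVec, dotProduct_sub, sub_nonneg]
  exact h v

lemma le_smul_one_iff {S : Matrix ι ι ℝ} (hS : S.IsHermitian) {b : ℝ} :
    S ≤ b • 1 ↔ ∀ v, v ⬝ᵥ S *ᵥ v ≤ b * enorm2 v ^ 2 := by
  simp only [← dotProduct_smul_one_mulVec]
  refine ⟨fun h v => dotProduct_mulVec_mono h v, fun h => .of_dotProduct_mulVec_nonneg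
    ((isHermitian_one.smul (.all b)).sub hS) fun v => ?_⟩
  rw [star_trivial, sub_mulVec, dotProduct_sub, sub_nonneg]
  exact h v

lemma enorm2_mulVec_sq_le {S : Matrix ι ι ℝ} {c : ℝ} (hS : S ∈ Set.Icc 0 (c • 1)) (v : ι → ℝ) :
    enorm2 (S *ᵥ v) ^ 2 ≤ c ^ 2 * enorm2 v ^ 2 := by
  set u := S *ᵥ v with hu
  rcases (sq_nonneg (enorm2 u)).eq_or_lt with h0 | hpos
  · rw [← h0]; positivity
  have quad_le (x : ι → ℝ) : x ⬝ᵥ S *ᵥ x ≤ c * enorm2 x ^ 2 :=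
    (dotProduct_mulVec_mono hS.2 x).trans_eq (dotProduct_smul_one_mulVec c x)
  have quad_nonneg (x : ι → ℝ) : 0 ≤ x ⬝ᵥ S *ᵥ x := by
    simpa using dotProduct_mulVec_mono hS.1 x
  refine le_of_mul_le_mul_left ?_ hpos
  calc enorm2 u ^ 2 * enorm2 u ^ 2 = (u ⬝ᵥ S *ᵥ v) ^ 2 := by
        rw [← hu, ← enorm2_sq_eq_dotProduct, ← sq]
    _ ≤ (u ⬝ᵥ S *ᵥ u) * (v ⬝ᵥ S *ᵥ v) := sq_dotProduct_mulVec_le hS.1 u v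
    _ ≤ (c * enorm2 u ^ 2) * (c * enorm2 v ^ 2) :=
        mul_le_mul (quad_le u) (quad_le v) (quad_nonneg v) ((quad_nonneg u).trans (quad_le u))
    _ = enorm2 u ^ 2 * (c ^ 2 * enorm2 v ^ 2) := by ring

lemma mul_enorm2_le_enorm2_mulVec {S : Matrix ι ι ℝ} {a : ℝ} (hS : a • 1 ≤ S) (v : ι → ℝ) :
    a * enorm2 v ≤ enorm2 (S *ᵥ v) := by
  rcases (enorm2_nonneg v).eq_or_lt with h0 | hpos
  · rw [← h0, mul_zero]; exact enorm2_nonneg _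
  refine le_of_mul_le_mul_left ?_ hpos
  calc enorm2 v * (a * enorm2 v) = a * enorm2 v ^ 2 := by ring
    _ ≤ v ⬝ᵥ S *ᵥ v := (dotProduct_smul_one_mulVec a v).symm.trans_le (dotProduct_mulVec_mono hS v)
    _ ≤ enorm2 v * enorm2 (S *ᵥ v) := dotProduct_le_enorm2_mul_enorm2 _ _

section CoerciveInverse

variable {S : Matrix ι ι ℝ} {a : ℝ} (ha : 0 < a) (hS : a • 1 ≤ S)

include ha hS

lemma isUnit_det_of_smul_one_le : IsUnit S.det := by
  have h := ((PosDef.one (n := ι) (R := ℝ)).smul ha).add_posSemidef (Matrix.le_iff.1 hS)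
  rw [add_sub_cancel] at h
  exact (isUnit_iff_isUnit_det S).1 h.isUnit

lemma mulVec_inv_mulVec_cancel (w : ι → ℝ) : S *ᵥ (S⁻¹ *ᵥ w) = w := by
  rw [mulVec_mulVec, mul_nonsing_inv _ (isUnit_det_of_smul_one_le ha hS), one_mulVec]

lemma enorm2_inv_mulVec_le (w : ι → ℝ) : enorm2 (S⁻¹ *ᵥ w) ≤ enorm2 w / a := by
  have := mul_enorm2_le_enorm2_mulVec hS (S⁻¹ *ᵥ w)
  rwa [mulVec_inv_mulVec_cancel ha hS, ← le_div_iff₀' ha] at this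

lemma trace_inv_le : S⁻¹.trace ≤ Fintype.card ι / a := by
  have hdiag (i : ι) : S⁻¹ i i ≤ 1 / a := by
    have hnorm : enorm2 (Pi.single i 1 : ι → ℝ) = 1 := by
      simp [enorm2_eq_norm]
    calc S⁻¹ i i = Pi.single i 1 ⬝ᵥ S⁻¹ *ᵥ Pi.single i 1 := by simp
      _ ≤ enorm2 (Pi.single i 1) * enorm2 (S⁻¹ *ᵥ Pi.single i 1) :=
          dotProduct_le_enorm2_mul_enorm2 _ _
      _ ≤ 1 / a := by
          simpa only [hnorm, one_mul] using enorm2_inv_mulVec_le ha hS (Pi.single i 1)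
  calc S⁻¹.trace ≤ ∑ _i : ι, 1 / a := Finset.sum_le_sum fun i _ => hdiag i
    _ = Fintype.card ι / a := by simp [div_eq_mul_inv]

lemma trace_inv_mul_mul_inv_mem_Icc {M : Matrix ι ι ℝ} (hM : M ∈ Set.Icc 0 S) :
    (S⁻¹ * M * S⁻¹).trace ∈ Set.Icc 0 (Fintype.card ι / a) := by
  have hinv : (S⁻¹)ᴴ = S⁻¹ :=
    (Matrix.nonneg_iff_posSemidef.1 (hM.1.trans hM.2)).isHermitian.inv.eq
  have hconj {A B : Matrix ι ι ℝ} (h : A ≤ B) : S⁻¹ * A * S⁻¹ ≤ S⁻¹ * B * S⁻¹ := by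
    simpa only [star_eq_conjTranspose, hinv] using star_left_conjugate_le_conjugate h S⁻¹
  have htrace {A B : Matrix ι ι ℝ} (h : A ≤ B) : A.trace ≤ B.trace :=
    Finset.sum_le_sum fun i _ => diag_apply_mono h i
  constructor
  · simpa using htrace (hconj hM.1)
  · have := htrace (hconj hM.2)
    rw [nonsing_inv_mul _ (isUnit_det_of_smul_one_le ha hS), one_mul] at this
    exact this.trans (trace_inv_le ha hS)

end CoerciveInverse

end LoewnerOrder

section CoerciveFamily

open scoped MatrixOrder

variable {α : Type*} {l : Filter α} {ι : α → Type*} [∀ x, Fintype (ι x)] [∀ x, DecidableEq (ι x)]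
  {S : ∀ x, Matrix (ι x) (ι x) ℝ} {a : ℝ}

lemma isBigO_enorm2_sq_inv_mulVec (ha : 0 < a) (hS : ∀ᶠ x in l, a • 1 ≤ S x)
    (w : ∀ x, ι x → ℝ) :
    (fun x => enorm2 ((S x)⁻¹ *ᵥ w x) ^ 2) =O[l] fun x => enorm2 (w x) ^ 2 := by
  refine IsBigO.pow (.of_bound a⁻¹ ?_) 2
  filter_upwards [hS] with x hx
  rw [Real.norm_of_nonneg (enorm2_nonneg _), Real.norm_of_nonneg (enorm2_nonneg _), inv_mul_eq_div]
  exact enorm2_inv_mulVec_le ha hx _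

lemma isTheta_enorm2_sq_inv_mulVec {c : ℝ} (ha : 0 < a)
    (hS : ∀ᶠ x in l, S x ∈ Set.Icc (a • 1) (c • 1)) (w : ∀ x, ι x → ℝ) :
    (fun x => enorm2 ((S x)⁻¹ *ᵥ w x) ^ 2) =Θ[l] fun x => enorm2 (w x) ^ 2 := by
  refine ⟨isBigO_enorm2_sq_inv_mulVec ha (hS.mono fun x hx => hx.1) w, .of_bound (c ^ 2) ?_⟩
  filter_upwards [hS] with x hx
  have hS0 : 0 ≤ S x := by simpa using (smul_one_le_smul_one ha.le).trans hx.1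
  rw [Real.norm_of_nonneg (sq_nonneg _), Real.norm_of_nonneg (sq_nonneg _)]
  simpa only [mulVec_inv_mulVec_cancel ha hx.1] using
    enorm2_mulVec_sq_le ⟨hS0, hx.2⟩ ((S x)⁻¹ *ᵥ w x)

lemma isLittleO_enorm2_sq_inv_mulVec_mulVec {D : ∀ x, Matrix (ι x) (ι x) ℝ}
    {β : ∀ x, ι x → ℝ} {τ r q : α → ℝ} (ha : 0 < a) (hS : ∀ᶠ x in l, a • 1 ≤ S x)
    (hD : ∀ᶠ x in l, D x ∈ Set.Icc 0 (τ x • 1)) (hτ : (fun x => τ x ^ 2) =o[l] r)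
    (hβ : (fun x => enorm2 (β x) ^ 2) =O[l] q) :
    (fun x => enorm2 ((S x)⁻¹ *ᵥ (D x *ᵥ β x)) ^ 2) =o[l] fun x => r x * q x := by
  have hDβ : (fun x => enorm2 (D x *ᵥ β x) ^ 2) =O[l] fun x => τ x ^ 2 * enorm2 (β x) ^ 2 := by
    refine .of_bound 1 ?_
    filter_upwards [hD] with x hx
    rw [Real.norm_of_nonneg (sq_nonneg _), Real.norm_of_nonneg (by positivity), one_mul]
    exact enorm2_mulVec_sq_le hx _
  exact ((isBigO_enorm2_sq_inv_mulVec ha hS _).trans hDβ).trans_isLittleO (hτ.mul_isBigO hβ)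

lemma isBigO_trace_inv_mul_mul_inv {M : ∀ x, Matrix (ι x) (ι x) ℝ} (ha : 0 < a)
    (hS : ∀ᶠ x in l, a • 1 ≤ S x) (hM : ∀ᶠ x in l, M x ∈ Set.Icc 0 (S x)) :
    (fun x => ((S x)⁻¹ * M x * (S x)⁻¹).trace) =O[l] fun x => (Fintype.card (ι x) : ℝ) := by
  refine .of_bound a⁻¹ ?_
  filter_upwards [hS, hM] with x hSx hMx
  obtain ⟨h0, hle⟩ := trace_inv_mul_mul_inv_mem_Icc ha hSx hMx
  rwa [Real.norm_of_nonneg h0, Real.norm_natCast, inv_mul_eq_div]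

end CoerciveFamily

section StochasticOrder

variable {Ω : ℕ → Type*} [∀ n, MeasurableSpace (Ω n)] {P : (n : ℕ) → Measure (Ω n)}

/-- The filter of events that hold with probability tending to one along a sequence of probability
spaces: `∀ᶠ x in highProb P, q x` means `P_n {ω | ¬ q ⟨n, ω⟩} → 0`. A bound in probability that
uses one constant for all probability levels is then an ordinary `=O` or `=o` along this filter. -/
def highProb (P : (n : ℕ) → Measure (Ω n)) : Filter (Σ n, Ω n) where
  sets := {s | Tendsto (fun n => P n (Sigma.mk n ⁻¹' s)ᶜ) atTop (nhds 0)}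
  univ_sets := by simp
  sets_of_superset {s t} hs hst :=
    tendsto_of_tendsto_of_tendsto_of_le_of_le tendsto_const_nhds hs (fun _ => zero_le)
      fun n => measure_mono (Set.compl_subset_compl.2 (Set.preimage_mono hst))
  inter_sets {s t} hs ht := by
    refine tendsto_of_tendsto_of_tendsto_of_le_of_le tendsto_const_nhds
      (by simpa using Tendsto.add hs ht) (fun _ => zero_le) fun n => ?_
    rw [Set.preimage_inter, Set.compl_inter]
    exact measure_union_le _ _

lemma tendsto_fst_highProb : Tendsto Sigma.fst (highProb P) atTop := by
  refine tendsto_atTop.2 fun N => tendsto_const_nhds.congr' ?_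
  filter_upwards [eventually_ge_atTop N] with n hn
  simp [Set.preimage, hn]

variable {A A' C : (n : ℕ) → Ω n → ℝ} {B : ℕ → ℝ}

lemma IsOmegaP.of_pos_of_eventually {ζ γ : ℝ} (hζ : 0 < ζ) (hγ : 0 < γ)
    (h : ∀ᶠ n in atTop, γ ≤ (P n).real {ω | ζ * B n ≤ |A n ω|}) : IsOmegaP P A B :=
  ⟨ζ, γ, hζ, hγ, eventually_atTop.1 h⟩

variable [∀ n, IsFiniteMeasure (P n)]

lemma eventually_highProb_iff {q : (n : ℕ) → Ω n → Prop} :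
    (∀ᶠ x in highProb P, q x.1 x.2) ↔
      Tendsto (fun n => (P n).real {ω | ¬ q n ω}) atTop (nhds 0) :=
  (ENNReal.tendsto_toReal_zero_iff fun _ => measure_ne_top _ _).symm

lemma eventually_measureReal_lt_add {s t : (n : ℕ) → Set (Ω n)} {γ : ℝ} (hγ : 0 < γ)
    (h : ∀ᶠ x in highProb P, x.2 ∈ s x.1 → x.2 ∈ t x.1) :
    ∀ᶠ n in atTop, (P n).real (s n) < (P n).real (t n) + γ := by
  have hbad := eventually_highProb_iff (q := fun n ω => ω ∈ s n → ω ∈ t n).1 h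
  filter_upwards [hbad.eventually (gt_mem_nhds hγ)] with n hn
  calc (P n).real (s n) ≤ (P n).real (t n ∪ {ω | ¬ (ω ∈ s n → ω ∈ t n)}) :=
        measureReal_mono fun ω hω => by by_cases hωt : ω ∈ t n <;> simp [hω, hωt]
    _ ≤ (P n).real (t n) + (P n).real {ω | ¬ (ω ∈ s n → ω ∈ t n)} := measureReal_union_le _ _
    _ < (P n).real (t n) + γ := by gcongr

lemma IsLittleOP.isLittleO (h : IsLittleOP P A B) :
    (fun x : Σ n, Ω n => A x.1 x.2) =o[highProb P] fun x => B x.1 := by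
  refine .of_bound fun c hc => ?_
  filter_upwards [eventually_highProb_iff (q := fun n ω => |A n ω| < c * B n).2
    (by simpa only [not_lt, measureReal_def] using h c hc)] with x hx
  rw [Real.norm_eq_abs]
  exact hx.le.trans (mul_le_mul_of_nonneg_left (Real.le_norm_self _) hc.le)

lemma IsLittleOP.isLittleO_sq_scaled (hA : IsLittleOP P A fun n => √n) :
    (fun x : Σ n, Ω n => ((x.1 : ℝ)⁻¹ * A x.1 x.2) ^ 2) =o[highProb P] fun x => (x.1 : ℝ)⁻¹ := by
  have := ((isBigO_refl (fun x : Σ n, Ω n => (x.1 : ℝ)⁻¹) (highProb P)).mul_isLittleO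
    hA.isLittleO).pow two_pos
  refine this.congr_right fun x => ?_
  rw [mul_pow, Real.sq_sqrt x.1.cast_nonneg, sq, mul_assoc]
  rcases eq_or_ne (x.1 : ℝ) 0 with h0 | h0
  · simp [h0]
  · rw [inv_mul_cancel₀ h0, mul_one]

lemma IsBigOP.of_isBigO (hB : ∀ n, 0 ≤ B n)
    (h : (fun x : Σ n, Ω n => A x.1 x.2) =O[highProb P] fun x => B x.1) : IsBigOP P A B := by
  obtain ⟨ζ, hζ, hbound⟩ := h.exists_pos
  refine fun γ hγ => ⟨ζ, hζ, eventually_atTop.1 ?_⟩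
  have := eventually_measureReal_lt_add (s := fun n => {ω | ζ * B n < |A n ω|})
    (t := fun _ => ∅) hγ <| by
      filter_upwards [hbound.bound] with x hx hlt
      rw [Real.norm_eq_abs, Real.norm_of_nonneg (hB x.1)] at hx
      exact (hx.not_gt hlt).elim
  simpa only [measureReal_def, measure_empty, ENNReal.toReal_zero, zero_add] using this

lemma IsBigOP.trans_isBigO (hA : IsBigOP P A B)
    (h : (fun x : Σ n, Ω n => A' x.1 x.2) =O[highProb P] fun x => A x.1 x.2) :
    IsBigOP P A' B := by
  obtain ⟨c, hc, hbound⟩ := h.exists_pos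
  intro γ hγ
  obtain ⟨ζ, hζ, N, hN⟩ := hA (γ / 2) (half_pos hγ)
  refine ⟨c * ζ, mul_pos hc hζ, eventually_atTop.1 ?_⟩
  have hincl := eventually_measureReal_lt_add (s := fun n => {ω | c * ζ * B n < |A' n ω|})
    (t := fun n => {ω | ζ * B n < |A n ω|}) (half_pos hγ) <| by
      filter_upwards [hbound.bound] with x hx (hlt : c * ζ * B x.1 < _)
      rw [Real.norm_eq_abs, Real.norm_eq_abs] at hx
      rw [mul_assoc] at hlt
      exact lt_of_mul_lt_mul_left (hlt.trans_le hx) hc.le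
  filter_upwards [hincl, eventually_ge_atTop N] with n hn hNn
  exact (hn.trans (add_lt_add_left (hN n hNn) _)).trans_eq (add_halves γ)

lemma IsOmegaP.trans_isBigO (hA : IsOmegaP P A B)
    (h : (fun x : Σ n, Ω n => A x.1 x.2) =O[highProb P] fun x => A' x.1 x.2) :
    IsOmegaP P A' B := by
  obtain ⟨c, hc, hbound⟩ := h.exists_pos
  obtain ⟨ζ, γ, hζ, hγ, N, hN⟩ := hA
  refine .of_pos_of_eventually (div_pos hζ hc) (half_pos hγ) ?_
  have hincl := eventually_measureReal_lt_add (s := fun n => {ω | ζ * B n ≤ |A n ω|})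
    (t := fun n => {ω | ζ / c * B n ≤ |A' n ω|}) (half_pos hγ) <| by
      filter_upwards [hbound.bound] with x hx (hle : ζ * B x.1 ≤ _)
      rw [Real.norm_eq_abs, Real.norm_eq_abs] at hx
      rw [div_mul_eq_mul_div, div_le_iff₀' hc]
      exact hle.trans hx
  filter_upwards [hincl, eventually_ge_atTop N] with n hn hNn
  have hγn : γ ≤ (P n).real {ω | ζ * B n ≤ |A n ω|} := hN n hNn
  linarith

lemma IsThetaP.congr_isTheta (hA : IsThetaP P A B)
    (h : (fun x : Σ n, Ω n => A x.1 x.2) =Θ[highProb P] fun x => A' x.1 x.2) :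
    IsThetaP P A' B :=
  ⟨hA.1.trans_isBigO h.2, hA.2.trans_isBigO h.1⟩

lemma IsBigOP.add (hA : IsBigOP P A B) (hC : IsBigOP P C B) :
    IsBigOP P (fun n ω => A n ω + C n ω) B := by
  intro γ hγ
  obtain ⟨ζ, hζ, N, hN⟩ := hA (γ / 2) (half_pos hγ)
  obtain ⟨ξ, hξ, N', hN'⟩ := hC (γ / 2) (half_pos hγ)
  refine ⟨ζ + ξ, add_pos hζ hξ, max N N', fun n hn => ?_⟩
  calc (P n).real {ω | (ζ + ξ) * B n < |A n ω + C n ω|}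
      ≤ (P n).real ({ω | ζ * B n < |A n ω|} ∪ {ω | ξ * B n < |C n ω|}) :=
        measureReal_mono fun ω hω => by
          rw [Set.mem_ofPred_eq] at hω
          by_contra! hsmall
          simp only [Set.mem_union, Set.mem_ofPred_eq, not_or, not_lt] at hsmall
          linarith [abs_add_le (A n ω) (C n ω)]
    _ ≤ _ := measureReal_union_le _ _
    _ < γ / 2 + γ / 2 :=
        add_lt_add (hN n ((le_max_left _ _).trans hn)) (hN' n ((le_max_right _ _).trans hn))
    _ = γ := add_halves γ

lemma IsOmegaP.of_add_isLittleO (hB : ∀ n, 0 ≤ B n)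
    (hAC : IsOmegaP P (fun n ω => A n ω + C n ω) B)
    (hC : (fun x : Σ n, Ω n => C x.1 x.2) =o[highProb P] fun x => B x.1) : IsOmegaP P A B := by
  obtain ⟨ζ, γ, hζ, hγ, N, hN⟩ := hAC
  refine .of_pos_of_eventually (half_pos hζ) (half_pos hγ) ?_
  have hincl := eventually_measureReal_lt_add (s := fun n => {ω | ζ * B n ≤ |A n ω + C n ω|})
    (t := fun n => {ω | ζ / 2 * B n ≤ |A n ω|}) (half_pos hγ) <| by
      filter_upwards [hC.bound (half_pos hζ)] with x hx (hle : ζ * B x.1 ≤ _)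
      rw [Real.norm_eq_abs, Real.norm_of_nonneg (hB x.1)] at hx
      linarith [abs_add_le (A x.1 x.2) (C x.1 x.2)]
  filter_upwards [hincl, eventually_ge_atTop N] with n hn hNn
  have hγn : γ ≤ (P n).real {ω | ζ * B n ≤ |A n ω + C n ω|} := hN n hNn
  linarith

lemma IsBigOP.isLittleOP_one (hA : IsBigOP P A B) (hB : Tendsto B atTop (nhds 0)) :
    IsLittleOP P A fun _ => 1 := by
  refine fun ρ hρ => tendsto_order.2 ⟨fun r hr => .of_forall fun _ =>
    hr.trans_le ENNReal.toReal_nonneg, fun γ hγ => ?_⟩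
  obtain ⟨ζ, _, N, hN⟩ := hA γ hγ
  have hsmall : Tendsto (fun n => ζ * B n) atTop (nhds 0) := by simpa using hB.const_mul ζ
  filter_upwards [eventually_ge_atTop N, hsmall.eventually (gt_mem_nhds hρ)] with n hn hlt
  refine (measureReal_mono (μ := P n) fun ω hω => ?_).trans_lt (hN n hn)
  rw [Set.mem_ofPred_eq, mul_one] at hω
  exact hlt.trans_le hω

lemma IsThetaP.enorm2_sq_add {ι : ℕ → Type*} [∀ n, Fintype (ι n)] {v w : ∀ n, Ω n → ι n → ℝ}
    (hB : ∀ n, 0 ≤ B n) (hw : IsThetaP P (fun n ω => enorm2 (w n ω) ^ 2) B)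
    (hv : (fun x : Σ n, Ω n => enorm2 (v x.1 x.2) ^ 2) =o[highProb P] fun x => B x.1) :
    IsThetaP P (fun n ω => enorm2 (v n ω + w n ω) ^ 2) B := by
  have isBigO_of_le {f g : (n : ℕ) → Ω n → ℝ} (hf : ∀ n ω, 0 ≤ f n ω)
      (hfg : ∀ n ω, f n ω ≤ 2 * g n ω) :
      (fun x : Σ n, Ω n => f x.1 x.2) =O[highProb P] fun x => g x.1 x.2 :=
    .of_bound 2 <| .of_forall fun x => by
      rw [Real.norm_of_nonneg (hf _ _)]
      linarith [hfg x.1 x.2, Real.le_norm_self (g x.1 x.2)]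
  have hvB : IsBigOP P (fun n ω => enorm2 (v n ω) ^ 2) B := .of_isBigO hB hv.isBigO
  constructor
  · exact (hvB.add hw.1).trans_isBigO <| isBigO_of_le
      (f := fun n ω => enorm2 (v n ω + w n ω) ^ 2)
      (g := fun n ω => enorm2 (v n ω) ^ 2 + enorm2 (w n ω) ^ 2)
      (fun _ _ => sq_nonneg _) fun _ _ => enorm2_add_sq_le _ _
  · refine IsOmegaP.of_add_isLittleO (C := fun n ω => enorm2 (v n ω) ^ 2) hB ?_ hv
    refine hw.2.trans_isBigO <| isBigO_of_le (f := fun n ω => enorm2 (w n ω) ^ 2)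
      (g := fun n ω => enorm2 (v n ω + w n ω) ^ 2 + enorm2 (v n ω) ^ 2)
      (fun _ _ => sq_nonneg _) fun n ω => ?_
    simpa [enorm2_neg] using enorm2_add_sq_le (v n ω + w n ω) (-v n ω)

end StochasticOrder

section Moments

variable {Ω : Type*} [MeasurableSpace Ω] {P : Measure Ω}

lemma integral_sub_le_mul_measureReal_le [IsProbabilityMeasure P] {f : Ω → ℝ} {t K : ℝ}
    (hf : Integrable f P) (ht : 0 ≤ t) (hfK : ∀ ω, f ω ≤ K) :
    ∫ ω, f ω ∂P - t ≤ K * P.real {ω | t ≤ f ω} := by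
  set E : Set Ω := {ω | t ≤ f ω}
  have hEmeas : NullMeasurableSet E P := nullMeasurableSet_le aemeasurable_const hf.aemeasurable
  have hind : Integrable (E.indicator fun _ => K) P := (integrable_const K).indicator₀ hEmeas
  have hle (ω : Ω) : f ω ≤ E.indicator (fun _ => K) ω + t := by
    by_cases hω : ω ∈ E
    · rw [Set.indicator_of_mem hω]
      linarith [hfK ω]
    · rw [Set.indicator_of_notMem hω, zero_add]
      exact (not_le.1 hω).le
  have hint : ∫ ω, f ω ∂P ≤ ∫ ω, E.indicator (fun _ => K) ω + t ∂P :=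
    integral_mono hf (hind.add (integrable_const t)) hle
  rw [integral_add hind (integrable_const _), integral_indicator₀ hEmeas, setIntegral_const,
    integral_const, probReal_univ, smul_eq_mul, smul_eq_mul, one_mul] at hint
  linarith

lemma IsBigOP.of_integral_isBigO {Ω : ℕ → Type*} [∀ n, MeasurableSpace (Ω n)]
    {P : (n : ℕ) → Measure (Ω n)} [∀ n, IsFiniteMeasure (P n)] {A : (n : ℕ) → Ω n → ℝ} {B : ℕ → ℝ}
    (hA : ∀ n ω, 0 ≤ A n ω) (hint : ∀ n, Integrable (A n) (P n)) (hB : ∀ n, 0 ≤ B n)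
    (h : (fun n => ∫ ω, A n ω ∂P n) =O[atTop] B) : IsBigOP P A B := by
  obtain ⟨c, hc, hbound⟩ := h.exists_pos
  refine fun γ hγ => ⟨2 * c / γ, by positivity, eventually_atTop.1 ?_⟩
  filter_upwards [hbound.bound] with n hn
  have hI : ∫ ω, A n ω ∂P n ≤ c * B n := by
    rwa [Real.norm_of_nonneg (integral_nonneg (hA n)), Real.norm_of_nonneg (hB n)] at hn
  change (P n).real {ω | 2 * c / γ * B n < |A n ω|} < γ
  simp only [abs_of_nonneg (hA n _)]
  rcases (hB n).eq_or_lt with h0 | hpos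
  · have hzero : A n =ᵐ[P n] 0 := (integral_eq_zero_iff_of_nonneg (hA n) (hint n)).1 <|
      le_antisymm (by simpa [← h0] using hI) (integral_nonneg (hA n))
    have : (P n).real {ω | 0 < A n ω} = 0 := by
      rw [measureReal_def, measure_eq_zero_iff_ae_notMem.2 (hzero.mono fun ω hω => by simp [hω]),
        ENNReal.toReal_zero]
    simpa only [← h0, mul_zero, this] using hγ
  · have hM := (mul_meas_ge_le_integral_of_nonneg (ae_of_all _ (hA n)) (hint n)
      (2 * c / γ * B n)).trans hI
    calc (P n).real {ω | 2 * c / γ * B n < A n ω}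
        ≤ (P n).real {ω | 2 * c / γ * B n ≤ A n ω} :=
          measureReal_mono fun ω (hω : _ < A n ω) => hω.le
      _ ≤ γ / 2 := by
          refine le_of_mul_le_mul_left (hM.trans_eq ?_) (show 0 < 2 * c / γ * B n by positivity)
          field_simp
      _ < γ := half_lt_self hγ

lemma IsMvGaussian.hasLaw_mulVec_apply {Ω κ ι : Type*} [MeasurableSpace Ω] {P : Measure Ω}
    [Fintype κ] {Z : Ω → κ → ℝ} {m : κ → ℝ} {V : Matrix κ κ ℝ} (hZ : IsMvGaussian P Z m V)
    (A : Matrix ι κ ℝ) (i : ι) :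
    HasLaw (fun ω => (A *ᵥ Z ω) i) (gaussianReal ((A *ᵥ m) i) ((A * V * Aᵀ) i i).toNNReal) P := by
  have hmap : P.map (fun ω => (A *ᵥ Z ω) i) =
      gaussianReal ((A *ᵥ m) i) ((A * V * Aᵀ) i i).toNNReal := by
    have hvar : (A * V * Aᵀ) i i = A i ⬝ᵥ V *ᵥ A i := by
      rw [dotProduct_mulVec]
      rfl
    rw [hvar]
    exact hZ (A i)
  refine ⟨?_, hmap⟩
  by_contra h
  rw [Measure.map_of_not_aemeasurable h] at hmap
  exact IsProbabilityMeasure.ne_zero _ hmap.symm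

lemma integrable_sq_of_hasLaw_gaussianReal {X : Ω → ℝ} {s : NNReal}
    (hX : HasLaw X (gaussianReal 0 s) P) : Integrable (fun ω => X ω ^ 2) P := by
  have := memLp_id_gaussianReal (μ := 0) (v := s) 2
  rw [← hX.map_eq] at this
  exact ((memLp_map_measure_iff (by fun_prop) hX.aemeasurable).1 this).integrable_sq

lemma integral_sq_of_hasLaw_gaussianReal {X : Ω → ℝ} {s : NNReal}
    (hX : HasLaw X (gaussianReal 0 s) P) : ∫ ω, X ω ^ 2 ∂P = s := by
  have h0 : ∫ ω, X ω ∂P = 0 := hX.integral_eq.trans integral_id_gaussianReal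
  rw [← variance_of_integral_eq_zero hX.aemeasurable h0, hX.variance_eq, variance_id_gaussianReal]

variable {ι : Type*} [Fintype ι] {Z : Ω → ι → ℝ} {s : ι → NNReal}

lemma integrable_enorm2_sq_of_hasLaw_gaussianReal
    (hZ : ∀ j, HasLaw (fun ω => Z ω j) (gaussianReal 0 (s j)) P) :
    Integrable (fun ω => enorm2 (Z ω) ^ 2) P := by
  simp only [enorm2_sq_eq_sum]
  exact integrable_finsetSum _ fun j _ => integrable_sq_of_hasLaw_gaussianReal (hZ j)

lemma integral_enorm2_sq_of_hasLaw_gaussianReal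
    (hZ : ∀ j, HasLaw (fun ω => Z ω j) (gaussianReal 0 (s j)) P) :
    ∫ ω, enorm2 (Z ω) ^ 2 ∂P = ∑ j, (s j : ℝ) := by
  simp only [enorm2_sq_eq_sum]
  rw [integral_finsetSum _ fun j _ => integrable_sq_of_hasLaw_gaussianReal (hZ j)]
  exact Finset.sum_congr rfl fun j _ => integral_sq_of_hasLaw_gaussianReal (hZ j)

/-- The truncated second moment `E[min(N², 1)]` of a standard Gaussian variable `N`, from which the
anti-concentration constants of Gaussian vectors are built. -/
noncomputable def gaussianTruncatedMoment : ℝ :=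
  ∫ x, min (x ^ 2) 1 ∂gaussianReal 0 1

lemma integrable_min_sq {X : Ω → ℝ} [IsFiniteMeasure P] (hX : AEMeasurable X P) {a : ℝ}
    (ha : 0 ≤ a) : Integrable (fun ω => min (X ω ^ 2) a) P := by
  refine .of_mem_Icc 0 a (by fun_prop) (ae_of_all _ fun ω => ?_)
  exact ⟨le_min (sq_nonneg _) ha, min_le_right _ _⟩

lemma gaussianTruncatedMoment_pos : 0 < gaussianTruncatedMoment := by
  refine (integral_pos_iff_support_of_nonneg (fun x => le_min (sq_nonneg x) zero_le_one)
    (integrable_min_sq aemeasurable_id zero_le_one)).2 ?_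
  have hsupp : Function.support (fun x : ℝ => min (x ^ 2) 1) = {0}ᶜ := by
    ext x
    rcases eq_or_ne x 0 with rfl | hx
    · simp
    · simpa [hx] using (lt_min (sq_pos_of_ne_zero hx) one_pos).ne'
  rw [hsupp, prob_compl_eq_one_sub (measurableSet_singleton 0)]
  have := nullSingletonClass_gaussianReal (μ := 0) (v := 1) one_ne_zero
  simp

lemma gaussianTruncatedMoment_le_one : gaussianTruncatedMoment ≤ 1 := by
  simpa [gaussianTruncatedMoment] using
    integral_mono (integrable_min_sq (P := gaussianReal 0 1) aemeasurable_id zero_le_one)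
    (integrable_const 1) fun x => min_le_right (x ^ 2) 1

lemma mul_gaussianTruncatedMoment_le_integral {X : Ω → ℝ} {v : NNReal} {a : ℝ}
    (hX : HasLaw X (gaussianReal 0 v) P) (ha : 0 ≤ a) (hav : a ≤ v) :
    a * gaussianTruncatedMoment ≤ ∫ ω, min (X ω ^ 2) a ∂P := by
  have hscale : gaussianReal 0 v = (gaussianReal 0 1).map (√v * ·) := by
    rw [gaussianReal_map_const_mul, mul_zero]
    congr 1
    ext
    simp
  have hmin (x : ℝ) : a * min (x ^ 2) 1 ≤ min ((√v * x) ^ 2) a := by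
    rw [mul_pow, Real.sq_sqrt v.coe_nonneg, mul_min_of_nonneg _ _ ha, mul_one]
    gcongr
  calc a * gaussianTruncatedMoment = ∫ x, a * min (x ^ 2) 1 ∂gaussianReal 0 1 :=
        (integral_const_mul _ _).symm
    _ ≤ ∫ x, min ((√v * x) ^ 2) a ∂gaussianReal 0 1 :=
        integral_mono ((integrable_min_sq aemeasurable_id zero_le_one).const_mul a)
          (integrable_min_sq (by fun_prop) ha) hmin
    _ = ∫ x, min (x ^ 2) a ∂gaussianReal 0 v := by
        rw [hscale, integral_map (by fun_prop) (by fun_prop)]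
    _ = ∫ ω, min (X ω ^ 2) a ∂P := (hX.integral_comp (by fun_prop)).symm

lemma half_gaussianTruncatedMoment_le_measureReal [IsProbabilityMeasure P] {a : ℝ}
    (hZ : ∀ j, HasLaw (fun ω => Z ω j) (gaussianReal 0 (s j)) P) (ha : 0 ≤ a)
    (has : ∀ j, a ≤ s j) :
    gaussianTruncatedMoment / 2 ≤
      P.real {ω | gaussianTruncatedMoment / 2 * (a * Fintype.card ι) ≤ enorm2 (Z ω) ^ 2} := by
  set η := gaussianTruncatedMoment
  have hη0 : 0 < η := gaussianTruncatedMoment_pos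
  set T : Ω → ℝ := fun ω => ∑ j, min (Z ω j ^ 2) a with hT
  set K : ℝ := a * Fintype.card ι with hK
  have hint (j : ι) : Integrable (fun ω => min (Z ω j ^ 2) a) P :=
    integrable_min_sq (hZ j).aemeasurable ha
  have hTK (ω : Ω) : T ω ≤ K := by
    simpa [hT, hK, mul_comm] using
      Finset.sum_le_sum fun j (_ : j ∈ Finset.univ) => min_le_right (Z ω j ^ 2) a
  have hmean : K * η ≤ ∫ ω, T ω ∂P := by
    rw [integral_finsetSum _ fun j _ => hint j]
    calc K * η = ∑ _j : ι, a * η := by simp [hK]; ring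
      _ ≤ ∑ j, ∫ ω, min (Z ω j ^ 2) a ∂P :=
          Finset.sum_le_sum fun j _ => mul_gaussianTruncatedMoment_le_integral (hZ j) ha (has j)
  rcases (show 0 ≤ K by positivity).eq_or_lt with hK0 | hKpos
  · simp only [← hK0, mul_zero, sq_nonneg, Set.ofPred_true, probReal_univ]
    linarith [gaussianTruncatedMoment_le_one]
  calc η / 2 ≤ P.real {ω | η / 2 * K ≤ T ω} := by
        have := integral_sub_le_mul_measureReal_le (t := η / 2 * K)
          (integrable_finsetSum _ fun j _ => hint j) (by positivity) hTK
        refine le_of_mul_le_mul_left ?_ hKpos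
        linarith
    _ ≤ P.real {ω | η / 2 * K ≤ enorm2 (Z ω) ^ 2} := measureReal_mono fun ω hω =>
        hω.trans <| (Finset.sum_le_sum fun j _ => min_le_left _ _).trans_eq
          (enorm2_sq_eq_sum _).symm

end Moments

section GaussianOrder

variable {Ω : ℕ → Type*} [∀ n, MeasurableSpace (Ω n)] {P : (n : ℕ) → Measure (Ω n)}
  [∀ n, IsProbabilityMeasure (P n)] {ι : ℕ → Type*} [∀ n, Fintype (ι n)]

lemma isThetaP_enorm2_sq_of_hasLaw_gaussianReal {Z : ∀ n, Ω n → ι n → ℝ} {s : ∀ n, ι n → NNReal}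
    {r : ℕ → ℝ} {a b : ℝ} (ha : 0 < a) (hr : ∀ n, 0 ≤ r n)
    (hZ : ∀ n j, HasLaw (fun ω => Z n ω j) (gaussianReal 0 (s n j)) (P n))
    (hs : ∀ᶠ n in atTop, ∀ j, (s n j : ℝ) ∈ Set.Icc (r n * a) (r n * b)) :
    IsThetaP P (fun n ω => enorm2 (Z n ω) ^ 2) fun n => r n * Fintype.card (ι n) := by
  constructor
  · refine .of_integral_isBigO (fun _ _ => sq_nonneg _)
      (fun n => integrable_enorm2_sq_of_hasLaw_gaussianReal (hZ n))
      (fun n => mul_nonneg (hr n) (Nat.cast_nonneg _)) (.of_bound b ?_)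
    filter_upwards [hs] with n hn
    have hsum : ∑ j, (s n j : ℝ) ≤ ∑ _j : ι n, r n * b := Finset.sum_le_sum fun j _ => (hn j).2
    rw [integral_enorm2_sq_of_hasLaw_gaussianReal (hZ n), Real.norm_of_nonneg (by positivity),
      Real.norm_of_nonneg (mul_nonneg (hr n) (Nat.cast_nonneg _))]
    refine hsum.trans_eq ?_
    rw [Finset.sum_const, Finset.card_univ, nsmul_eq_mul]
    ring
  · have hη := gaussianTruncatedMoment_pos
    refine .of_pos_of_eventually (mul_pos (half_pos hη) ha) (half_pos hη) ?_
    filter_upwards [hs] with n hn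
    have := half_gaussianTruncatedMoment_le_measureReal (hZ n) (mul_nonneg (hr n) ha.le)
      fun j => (hn j).1
    rw [mul_assoc, mul_left_comm] at this
    simpa only [abs_of_nonneg (sq_nonneg (enorm2 _)), mul_assoc, mul_left_comm] using this

end GaussianOrder

section Ridge

open scoped MatrixOrder

lemma centering_mul_of_sum_eq_zero {κ ι : Type*} [Fintype κ] [DecidableEq κ] {X : Matrix κ ι ℝ}
    (hX : ∀ j, ∑ i, X i j = 0) (c : ℝ) :
    ((1 : Matrix κ κ ℝ) - c • Matrix.of fun _ _ => (1 : ℝ)) * X = X := by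
  have hJX : (Matrix.of fun _ _ => (1 : ℝ) : Matrix κ κ ℝ) * X = 0 := by
    ext i j
    simp [mul_apply, hX]
  rw [Matrix.sub_mul, Matrix.one_mul, Matrix.smul_mul, hJX, smul_zero, sub_zero]

section Design

variable {n : ℕ} {ι : Type*}

/-- The empirical second moment matrix `XᵀX/n` of a design matrix `X` with `n` rows. -/
noncomputable def scaledGram (X : Matrix (Fin n) ι ℝ) : Matrix ι ι ℝ :=
  (n : ℝ)⁻¹ • (Xᵀ * X)

/-- The matrix `(XᵀX + D)/n` that a ridge estimator with penalty matrix `D` inverts. Dividing by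
`n` makes its spectrum bounded and bounded away from zero. -/
noncomputable def scaledRidge (X : Matrix (Fin n) ι ℝ) (D : Matrix ι ι ℝ) : Matrix ι ι ℝ :=
  (n : ℝ)⁻¹ • (Xᵀ * X) + (n : ℝ)⁻¹ • D

lemma scaledGram_le_scaledRidge (X : Matrix (Fin n) ι ℝ)
    {D : Matrix ι ι ℝ} (hD : 0 ≤ D) : scaledGram X ≤ scaledRidge X D := by
  rw [scaledGram, scaledRidge, Matrix.le_iff, add_sub_cancel_left]
  exact (Matrix.nonneg_iff_posSemidef.1 hD).smul (by positivity)

lemma isHermitian_scaledGram (X : Matrix (Fin n) ι ℝ) : (scaledGram X).IsHermitian := by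
  simpa only [scaledGram, conjTranspose_eq_transpose_of_trivial] using
    (isHermitian_conjTranspose_mul_self X).smul (.all (n : ℝ)⁻¹)

variable [Fintype ι] [DecidableEq ι]

lemma scaledGram_mem_Icc {X : Matrix (Fin n) ι ℝ} {a b : ℝ} (hn : n ≠ 0)
    (hX : ∀ v, n * a * enorm2 v ^ 2 ≤ v ⬝ᵥ (Xᵀ * X) *ᵥ v ∧
      v ⬝ᵥ (Xᵀ * X) *ᵥ v ≤ n * b * enorm2 v ^ 2) :
    scaledGram X ∈ Set.Icc (a • 1) (b • 1) := by
  have hn0 : (0 : ℝ) < n := by positivity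
  rw [Set.mem_Icc, smul_one_le_iff (isHermitian_scaledGram X),
    le_smul_one_iff (isHermitian_scaledGram X), ← forall_and]
  intro v
  rw [scaledGram, smul_mulVec, dotProduct_smul, smul_eq_mul, le_inv_mul_iff₀ hn0,
    inv_mul_le_iff₀ hn0, ← mul_assoc, ← mul_assoc]
  exact hX v

/-- The ridge estimator with penalty matrix `D`, i.e. the generic posterior mean. -/
noncomputable def ridgeEstimator (X : Matrix (Fin n) ι ℝ) (D : Matrix ι ι ℝ) (y : Fin n → ℝ) :
    ι → ℝ :=
  (Xᵀ * X + D)⁻¹ *ᵥ (Xᵀ *ᵥ y)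

/-- The bias of the ridge estimator at the true parameter `β`, conditional on `D`. -/
noncomputable def ridgeBias (X : Matrix (Fin n) ι ℝ) (D : Matrix ι ι ℝ) (β : ι → ℝ) : ι → ℝ :=
  -((n : ℝ)⁻¹ • ((scaledRidge X D)⁻¹ *ᵥ (D *ᵥ β)))

/-- The covariance of the ridge estimator, conditional on `D`, when the columns of `X` are centered
and the errors have covariance `σ2` times the centering matrix. -/
noncomputable def ridgeCovariance (σ2 : ℝ) (X : Matrix (Fin n) ι ℝ) (D : Matrix ι ι ℝ) :
    Matrix ι ι ℝ :=
  (σ2 / n) • ((scaledRidge X D)⁻¹ * scaledGram X * (scaledRidge X D)⁻¹)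

lemma ridgeEstimator_sub_eq {X : Matrix (Fin n) ι ℝ} {D : Matrix ι ι ℝ} (hn : n ≠ 0)
    (hS : IsUnit (scaledRidge X D).det) (β : ι → ℝ) (e : Fin n → ℝ) :
    ridgeEstimator X D (X *ᵥ β + e) - β =
      ridgeBias X D β + (scaledRidge X D)⁻¹ *ᵥ (((n : ℝ)⁻¹ • Xᵀ) *ᵥ e) := by
  have hn0 : (n : ℝ) ≠ 0 := Nat.cast_ne_zero.2 hn
  have hSn : Xᵀ * X + D = (n : ℝ) • scaledRidge X D := by
    rw [scaledRidge, ← smul_add, smul_inv_smul₀ hn0]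
  have hdet : IsUnit (Xᵀ * X + D).det := by
    rw [hSn, det_smul]
    exact ((Ne.isUnit hn0).pow _).mul hS
  have hinv : (Xᵀ * X + D)⁻¹ = (n : ℝ)⁻¹ • (scaledRidge X D)⁻¹ := by
    refine inv_eq_right_inv ?_
    rw [hSn, smul_mul_smul_comm, mul_inv_cancel₀ hn0, one_smul, mul_nonsing_inv _ hS]
  have hβ : β = (Xᵀ * X + D)⁻¹ *ᵥ ((Xᵀ * X) *ᵥ β + D *ᵥ β) := by
    rw [← add_mulVec, mulVec_mulVec, nonsing_inv_mul _ hdet, one_mulVec]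
  calc ridgeEstimator X D (X *ᵥ β + e) - β
      = (Xᵀ * X + D)⁻¹ *ᵥ (Xᵀ *ᵥ (X *ᵥ β + e))
          - (Xᵀ * X + D)⁻¹ *ᵥ ((Xᵀ * X) *ᵥ β + D *ᵥ β) := by
        rw [← hβ, ridgeEstimator]
    _ = -((Xᵀ * X + D)⁻¹ *ᵥ (D *ᵥ β)) + (Xᵀ * X + D)⁻¹ *ᵥ (Xᵀ *ᵥ e) := by
        simp only [mulVec_add, mulVec_mulVec]
        abel
    _ = _ := by simp only [ridgeBias, hinv, smul_mulVec, mulVec_smul]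

end Design

section RidgeAsymptotics

variable {Ω : ℕ → Type*} [∀ n, MeasurableSpace (Ω n)] {P : (n : ℕ) → Measure (Ω n)}
  {ι : ℕ → Type*} [∀ n, DecidableEq (ι n)]
  {X : ∀ n, Matrix (Fin n) (ι n) ℝ} {D : ∀ n, Ω n → Matrix (ι n) (ι n) ℝ} {T : ∀ n, Ω n → ℝ}
  {a b : ℝ}

lemma eventually_smul_one_le_scaledRidge (hX : ∀ᶠ n in atTop, a • 1 ≤ scaledGram (X n))
    (hD : ∀ n ω, 0 ≤ D n ω) :
    ∀ᶠ x in highProb P, a • 1 ≤ scaledRidge (X x.1) (D x.1 x.2) := by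
  filter_upwards [tendsto_fst_highProb.eventually hX] with x hx
  exact hx.trans (scaledGram_le_scaledRidge _ (hD _ _))

lemma isBigO_trace_ridgeCovariance [∀ n, Fintype (ι n)] (σ2 : ℝ) (ha : 0 < a)
    (hX : ∀ᶠ n in atTop, a • 1 ≤ scaledGram (X n)) (hD : ∀ n ω, 0 ≤ D n ω) :
    (fun x : Σ n, Ω n => (ridgeCovariance σ2 (X x.1) (D x.1 x.2)).trace) =O[highProb P]
      fun x => (Fintype.card (ι x.1) : ℝ) / x.1 := by
  have htrace := isBigO_trace_inv_mul_mul_inv (M := fun x : Σ n, Ω n => scaledGram (X x.1)) ha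
    (eventually_smul_one_le_scaledRidge (P := P) hX hD) <| by
      filter_upwards [tendsto_fst_highProb.eventually hX] with x hx
      exact ⟨by simpa using (smul_one_le_smul_one ha.le).trans hx,
        scaledGram_le_scaledRidge _ (hD _ _)⟩
  simp only [ridgeCovariance, trace_smul, smul_eq_mul, div_mul_eq_mul_div, mul_div_assoc]
  exact ((htrace.mul (isBigO_refl (fun x : Σ n, Ω n => (x.1 : ℝ)⁻¹) _)).const_mul_left σ2)

variable [∀ n, IsFiniteMeasure (P n)]

lemma eventually_scaledRidge_mem_Icc
    (hX : ∀ᶠ n in atTop, scaledGram (X n) ∈ Set.Icc (a • 1) (b • 1))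
    (hD : ∀ n ω, D n ω ∈ Set.Icc 0 (T n ω • (1 : Matrix (ι n) (ι n) ℝ)))
    (hT : IsLittleOP P T fun n => √n) :
    ∀ᶠ x in highProb P, scaledRidge (X x.1) (D x.1 x.2) ∈ Set.Icc (a • 1) ((b + 1) • 1) := by
  filter_upwards [tendsto_fst_highProb.eventually hX,
    hT.isLittleO_sq_scaled.bound one_pos] with x hXx hTx
  have hT1 : (x.1 : ℝ)⁻¹ * T x.1 x.2 ≤ 1 := by
    refine le_of_abs_le ((sq_le_one_iff_abs_le_one _).1 ?_)
    rw [Real.norm_of_nonneg (sq_nonneg _), Real.norm_of_nonneg (by positivity), one_mul] at hTx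
    exact hTx.trans (Nat.cast_inv_le_one _)
  refine ⟨hXx.1.trans (scaledGram_le_scaledRidge _ (hD _ _).1), ?_⟩
  rw [add_smul]
  exact add_le_add hXx.2 <|
    (smul_mem_Icc_smul_one (by positivity) (hD _ _)).2.trans (smul_one_le_smul_one hT1)

variable [∀ n, Fintype (ι n)] {β : ∀ n, ι n → ℝ}

lemma isLittleO_enorm2_sq_ridgeBias (ha : 0 < a)
    (hX : ∀ᶠ n in atTop, a • 1 ≤ scaledGram (X n))
    (hD : ∀ n ω, D n ω ∈ Set.Icc 0 (T n ω • (1 : Matrix (ι n) (ι n) ℝ)))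
    (hT : IsLittleOP P T fun n => √n)
    (hβ : (fun n => enorm2 (β n) ^ 2) =O[atTop] fun n => (Fintype.card (ι n) : ℝ)) :
    (fun x : Σ n, Ω n => enorm2 (ridgeBias (X x.1) (D x.1 x.2) (β x.1)) ^ 2) =o[highProb P]
      fun x => (Fintype.card (ι x.1) : ℝ) / x.1 := by
  have := isLittleO_enorm2_sq_inv_mulVec_mulVec (l := highProb P)
    (D := fun x => (x.1 : ℝ)⁻¹ • D x.1 x.2) ha
    (eventually_smul_one_le_scaledRidge hX fun n ω => (hD n ω).1)
    (.of_forall fun x => smul_mem_Icc_smul_one (by positivity) (hD x.1 x.2)) hT.isLittleO_sq_scaled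
    (hβ.comp_tendsto tendsto_fst_highProb)
  simpa only [ridgeBias, enorm2_neg, smul_mulVec, mulVec_smul, div_eq_inv_mul,
    Function.comp_apply] using this

lemma isBigOP_ridge_risk (σ2 : ℝ) (ha : 0 < a)
    (hX : ∀ᶠ n in atTop, a • 1 ≤ scaledGram (X n))
    (hD : ∀ n ω, D n ω ∈ Set.Icc 0 (T n ω • (1 : Matrix (ι n) (ι n) ℝ)))
    (hT : IsLittleOP P T fun n => √n)
    (hβ : (fun n => enorm2 (β n) ^ 2) =O[atTop] fun n => (Fintype.card (ι n) : ℝ)) :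
    IsBigOP P (fun n ω => enorm2 (ridgeBias (X n) (D n ω) (β n)) ^ 2 +
      (ridgeCovariance σ2 (X n) (D n ω)).trace) fun n => (Fintype.card (ι n) : ℝ) / n :=
  .of_isBigO (fun n => by positivity) <|
    (isLittleO_enorm2_sq_ridgeBias ha hX hD hT hβ).isBigO.add
      (isBigO_trace_ridgeCovariance σ2 ha hX fun n ω => (hD n ω).1)

end RidgeAsymptotics

section RidgeError

variable {Ω : ℕ → Type*} [∀ n, MeasurableSpace (Ω n)] {P : (n : ℕ) → Measure (Ω n)}
  [∀ n, IsProbabilityMeasure (P n)]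
  {ι : ℕ → Type*} [∀ n, Fintype (ι n)] [∀ n, DecidableEq (ι n)]
  {X : ∀ n, Matrix (Fin n) (ι n) ℝ} {ε : ∀ n, Ω n → Fin n → ℝ} {σ2 a b : ℝ}

lemma isThetaP_enorm2_sq_score (hσ2 : 0 < σ2) (ha : 0 < a) (hXc : ∀ n j, ∑ i, X n i j = 0)
    (hX : ∀ᶠ n in atTop, scaledGram (X n) ∈ Set.Icc (a • 1) (b • 1))
    (hε : ∀ n, IsMvGaussian (P n) (ε n) 0
      (σ2 • ((1 : Matrix (Fin n) (Fin n) ℝ) - (n : ℝ)⁻¹ • Matrix.of fun _ _ => (1 : ℝ)))) :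
    IsThetaP P (fun n ω => enorm2 (((n : ℝ)⁻¹ • (X n)ᵀ) *ᵥ ε n ω) ^ 2)
      fun n => (Fintype.card (ι n) : ℝ) / n := by
  set s : ∀ n, ι n → ℝ := fun n j => (n : ℝ)⁻¹ * (σ2 * scaledGram (X n) j j) with hs
  have hlaw (n : ℕ) (j : ι n) : HasLaw (fun ω => (((n : ℝ)⁻¹ • (X n)ᵀ) *ᵥ ε n ω) j)
      (gaussianReal 0 (s n j).toNNReal) (P n) := by
    convert (hε n).hasLaw_mulVec_apply ((n : ℝ)⁻¹ • (X n)ᵀ) j using 3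
    · simp
    · simp only [hs, transpose_smul, transpose_transpose, Matrix.mul_smul, Matrix.smul_mul,
        Matrix.mul_assoc, centering_mul_of_sum_eq_zero (hXc n), scaledGram, Matrix.smul_apply,
        smul_eq_mul]
  simp only [div_eq_inv_mul]
  refine isThetaP_enorm2_sq_of_hasLaw_gaussianReal (mul_pos hσ2 ha) (b := σ2 * b)
    (fun n => by positivity) hlaw ?_
  filter_upwards [hX] with n hn j
  have hlow : a ≤ scaledGram (X n) j j := by simpa using diag_apply_mono hn.1 j
  have hupp : scaledGram (X n) j j ≤ b := by simpa using diag_apply_mono hn.2 j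
  rw [Real.coe_toNNReal _ (mul_nonneg (by positivity) (mul_nonneg hσ2.le (ha.le.trans hlow)))]
  exact ⟨mul_le_mul_of_nonneg_left (mul_le_mul_of_nonneg_left hlow hσ2.le) (by positivity),
    mul_le_mul_of_nonneg_left (mul_le_mul_of_nonneg_left hupp hσ2.le) (by positivity)⟩

lemma isThetaP_ridge_error {D : ∀ n, Ω n → Matrix (ι n) (ι n) ℝ} {T : ∀ n, Ω n → ℝ}
    {β : ∀ n, ι n → ℝ} (hσ2 : 0 < σ2) (ha : 0 < a) (hXc : ∀ n j, ∑ i, X n i j = 0)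
    (hX : ∀ᶠ n in atTop, scaledGram (X n) ∈ Set.Icc (a • 1) (b • 1))
    (hε : ∀ n, IsMvGaussian (P n) (ε n) 0
      (σ2 • ((1 : Matrix (Fin n) (Fin n) ℝ) - (n : ℝ)⁻¹ • Matrix.of fun _ _ => (1 : ℝ))))
    (hD : ∀ n ω, D n ω ∈ Set.Icc 0 (T n ω • (1 : Matrix (ι n) (ι n) ℝ)))
    (hT : IsLittleOP P T fun n => √n)
    (hβ : (fun n => enorm2 (β n) ^ 2) =O[atTop] fun n => (Fintype.card (ι n) : ℝ)) :
    IsThetaP P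
      (fun n ω => enorm2 (ridgeEstimator (X n) (D n ω) (X n *ᵥ β n + ε n ω) - β n) ^ 2)
      fun n => (Fintype.card (ι n) : ℝ) / n := by
  have hS := eventually_scaledRidge_mem_Icc (P := P) hX hD hT
  have hnoise : IsThetaP P
      (fun n ω => enorm2 ((scaledRidge (X n) (D n ω))⁻¹ *ᵥ (((n : ℝ)⁻¹ • (X n)ᵀ) *ᵥ ε n ω)) ^ 2)
      fun n => (Fintype.card (ι n) : ℝ) / n :=
    (isThetaP_enorm2_sq_score hσ2 ha hXc hX hε).congr_isTheta
      (isTheta_enorm2_sq_inv_mulVec ha hS fun x => ((x.1 : ℝ)⁻¹ • (X x.1)ᵀ) *ᵥ ε x.1 x.2).symm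
  have hbias := isLittleO_enorm2_sq_ridgeBias ha (hX.mono fun n hn => hn.1) hD hT hβ
  refine (IsThetaP.enorm2_sq_add (v := fun n ω => ridgeBias (X n) (D n ω) (β n))
    (fun n => by positivity) hnoise hbias).congr_isTheta (EventuallyEq.isTheta ?_)
  filter_upwards [hS, tendsto_fst_highProb.eventually_ne_atTop 0] with x hSx hx
  rw [ridgeEstimator_sub_eq hx (isUnit_det_of_smul_one_le ha hSx.1)]

end RidgeError

theorem stmt_4_general
    (Ω : ℕ → Type*) [∀ n, MeasurableSpace (Ω n)]
    (P : (n : ℕ) → Measure (Ω n)) [∀ n, IsProbabilityMeasure (P n)]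
    (G : ℕ → ℕ) (pg : (n : ℕ) → Fin (G n) → ℕ)
    (X : (n : ℕ) → Matrix (Fin n) ((g : Fin (G n)) × Fin (pg n g)) ℝ)
    (hXc : ∀ n j, ∑ i, X n i j = 0)
    (β0 : (n : ℕ) → ((g : Fin (G n)) × Fin (pg n g)) → ℝ)
    (σ2 : ℝ) (hσ2 : 0 < σ2)
    (ε : (n : ℕ) → Ω n → Fin n → ℝ)
    (hε : ∀ n, IsMvGaussian (P n) (ε n) 0
      (σ2 • ((1 : Matrix (Fin n) (Fin n) ℝ) - ((n : ℝ))⁻¹ • Matrix.of fun _ _ => (1 : ℝ))))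
    (y : (n : ℕ) → Ω n → Fin n → ℝ) (hy : ∀ n ω, y n ω = X n *ᵥ β0 n + ε n ω)
    (hB1a : (fun n => (∑ g, pg n g : ℝ)) =o[atTop] fun n => (n : ℝ))
    (dmin dmax : ℝ) (hdmin : 0 < dmin)
    (hB3 : ∃ N : ℕ, ∀ n, N ≤ n → ∀ v : ((g : Fin (G n)) × Fin (pg n g)) → ℝ,
      (n : ℝ) * dmin * enorm2 v ^ 2 ≤ v ⬝ᵥ (((X n)ᵀ * X n) *ᵥ v) ∧
      v ⬝ᵥ (((X n)ᵀ * X n) *ᵥ v) ≤ (n : ℝ) * dmax * enorm2 v ^ 2)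
    (hB4 : ∃ U : ℝ, ∃ N : ℕ, ∀ n, N ≤ n → ∀ g, enorm2 (fun j => β0 n ⟨g, j⟩) ≤ U)
    (δ : (n : ℕ) → Ω n → Fin (G n) → ℝ) (hδ0 : ∀ n ω g, 0 ≤ δ n ω g)
    (hδo : IsLittleOP P (fun n ω => sSup (Set.range (δ n ω))) fun n => Real.sqrt n)
    (Δ : (n : ℕ) → Ω n → Matrix ((g : Fin (G n)) × Fin (pg n g)) ((g : Fin (G n)) × Fin (pg n g)) ℝ)
    (hΔ : ∀ n ω, Δ n ω = Matrix.diagonal fun i => δ n ω i.1)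
    (βhat : (n : ℕ) → Ω n → ((g : Fin (G n)) × Fin (pg n g)) → ℝ)
    (hβhat : ∀ n ω, βhat n ω = ((X n)ᵀ * X n + Δ n ω)⁻¹ *ᵥ ((X n)ᵀ *ᵥ y n ω))
    (m : (n : ℕ) → Ω n → ((g : Fin (G n)) × Fin (pg n g)) → ℝ)
    (hm : ∀ n ω, m n ω = -(((n : ℝ))⁻¹ •
      ((((n : ℝ))⁻¹ • ((X n)ᵀ * X n) + ((n : ℝ))⁻¹ • Δ n ω)⁻¹ *ᵥ (Δ n ω *ᵥ β0 n))))
    (V : (n : ℕ) → Ω n → Matrix ((g : Fin (G n)) × Fin (pg n g)) ((g : Fin (G n)) × Fin (pg n g)) ℝ)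
    (hV : ∀ n ω, V n ω = (σ2 / (n : ℝ)) •
      (((((n : ℝ))⁻¹ • ((X n)ᵀ * X n) + ((n : ℝ))⁻¹ • Δ n ω)⁻¹)
        * (((n : ℝ))⁻¹ • ((X n)ᵀ
            * ((1 : Matrix (Fin n) (Fin n) ℝ) - ((n : ℝ))⁻¹ • Matrix.of fun _ _ => (1 : ℝ))
            * X n))
        * ((((n : ℝ))⁻¹ • ((X n)ᵀ * X n) + ((n : ℝ))⁻¹ • Δ n ω)⁻¹))) :
    IsBigOP P (fun n ω => enorm2 (m n ω) ^ 2 + Matrix.trace (V n ω))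
      (fun n => (∑ g, pg n g : ℝ) / (n : ℝ)) ∧
    IsLittleOP P (fun n ω => enorm2 (m n ω) ^ 2 + Matrix.trace (V n ω)) (fun _ => 1) ∧
    IsThetaP P (fun n ω => (enorm2 fun i => βhat n ω i - β0 n i) ^ 2)
      (fun n => (∑ g, pg n g : ℝ) / (n : ℝ)) := by
  have hX : ∀ᶠ n in atTop, scaledGram (X n) ∈ Set.Icc (dmin • 1) (dmax • 1) := by
    filter_upwards [eventually_atTop.2 hB3, eventually_ne_atTop 0] with n hquad hn
    exact scaledGram_mem_Icc hn hquad
  have hD (n : ℕ) (ω : Ω n) : Δ n ω ∈ Set.Icc 0 (sSup (Set.range (δ n ω)) • 1) := by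
    rw [hΔ]
    exact diagonal_mem_Icc (fun i => hδ0 n ω i.1) fun i =>
      le_csSup (Set.finite_range _).bddAbove (Set.mem_range_self i.1)
  have hβ : (fun n => enorm2 (β0 n) ^ 2) =O[atTop] fun n =>
      (Fintype.card ((g : Fin (G n)) × Fin (pg n g)) : ℝ) := by
    obtain ⟨U, hU⟩ := hB4
    refine .of_bound (U ^ 2) ((eventually_atTop.2 hU).mono fun n hn => ?_)
    rw [Real.norm_of_nonneg (sq_nonneg _), Real.norm_natCast]
    exact enorm2_sq_le_mul_card_of_blocks hn
  have hcov (n : ℕ) (ω : Ω n) : V n ω = ridgeCovariance σ2 (X n) (Δ n ω) := by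
    rw [hV, Matrix.mul_assoc (X n)ᵀ, centering_mul_of_sum_eq_zero (hXc n)]
    rfl
  have hcard (n : ℕ) : ∑ g, (pg n g : ℝ) = Fintype.card ((g : Fin (G n)) × Fin (pg n g)) := by
    simp
  have hrisk := isBigOP_ridge_risk σ2 hdmin (hX.mono fun _ h => h.1) hD hδo hβ
  have herror := isThetaP_ridge_error hσ2 hdmin hXc hX hε hD hδo hβ
  have hrate := hB1a.tendsto_div_nhds_zero
  simp only [hcard, hm, hcov, hβhat, hy] at hrate ⊢
  exact ⟨hrisk, hrisk.isLittleOP_one hrate, herror⟩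

end Ridge

open MeasureTheory ProbabilityTheory Matrix Filter Asymptotics in
/-- Supplementary Lemma 2: under (B1)–(B4), the generic posterior mean satisfies
`E‖β̂_n − β⁰_n‖² = O_p(p_n/n) → 0` (expectation over the Gaussian errors conditional on `Δ_n`,
which equals `‖m_n‖² + tr V_n`), and `‖β̂_n − β⁰_n‖² ≍ p_n/n`. -/
theorem stmt_4
    -- probability spaces
    (Ω : ℕ → Type) [∀ n, MeasurableSpace (Ω n)]
    (P : (n : ℕ) → Measure (Ω n)) [∀ n, IsProbabilityMeasure (P n)]
    -- grouped design: group `g` has size `pg n g`; coordinates are indexed by the sigma type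
    (G : ℕ → ℕ) (pg : (n : ℕ) → Fin (G n) → ℕ)
    (X : (n : ℕ) → Matrix (Fin n) ((g : Fin (G n)) × Fin (pg n g)) ℝ)
    (hXc : ∀ n j, ∑ i, X n i j = 0)
    -- true model
    (β0 : (n : ℕ) → ((g : Fin (G n)) × Fin (pg n g)) → ℝ)
    (σ2 : ℝ) (hσ2 : 0 < σ2)
    (ε : (n : ℕ) → Ω n → Fin n → ℝ)
    (hε : ∀ n, IsMvGaussian (P n) (ε n) 0
      (σ2 • ((1 : Matrix (Fin n) (Fin n) ℝ) - ((n : ℝ))⁻¹ • Matrix.of fun _ _ => (1 : ℝ))))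
    (y : (n : ℕ) → Ω n → Fin n → ℝ) (hy : ∀ n ω, y n ω = X n *ᵥ β0 n + ε n ω)
    -- (B1)
    (hB1a : (fun n => (∑ g, pg n g : ℝ)) =o[atTop] fun n => (n : ℝ))
    (hB1b : ∃ Pmax : ℝ, ∃ N : ℕ, ∀ n, N ≤ n → ∀ g, (pg n g : ℝ) ≤ Pmax)
    -- (B2): the number of truly important predictors is `o` of the total number
    (hB2 : (fun n => ∑ g ∈ Finset.univ.filter (fun g => ∃ j, β0 n ⟨g, j⟩ ≠ 0), (pg n g : ℝ))
      =o[atTop] fun n => (∑ g, pg n g : ℝ))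
    -- (B3)
    (dmin dmax : ℝ) (hdmin : 0 < dmin)
    (hB3 : ∃ N : ℕ, ∀ n, N ≤ n → ∀ v : ((g : Fin (G n)) × Fin (pg n g)) → ℝ,
      (n : ℝ) * dmin * enorm2 v ^ 2 ≤ v ⬝ᵥ (((X n)ᵀ * X n) *ᵥ v) ∧
      v ⬝ᵥ (((X n)ᵀ * X n) *ᵥ v) ≤ (n : ℝ) * dmax * enorm2 v ^ 2)
    -- (B4)
    (hB4 : ∃ U : ℝ, ∃ N : ℕ, ∀ n, N ≤ n → ∀ g, enorm2 (fun j => β0 n ⟨g, j⟩) ≤ U)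
    -- generic posterior quantities
    (δ : (n : ℕ) → Ω n → Fin (G n) → ℝ) (hδ0 : ∀ n ω g, 0 ≤ δ n ω g)
    (hδo : IsLittleOP P (fun n ω => sSup (Set.range (δ n ω))) fun n => Real.sqrt n)
    (Δ : (n : ℕ) → Ω n → Matrix ((g : Fin (G n)) × Fin (pg n g)) ((g : Fin (G n)) × Fin (pg n g)) ℝ)
    (hΔ : ∀ n ω, Δ n ω = Matrix.diagonal fun i => δ n ω i.1)
    (βhat : (n : ℕ) → Ω n → ((g : Fin (G n)) × Fin (pg n g)) → ℝ)
    (hβhat : ∀ n ω, βhat n ω = ((X n)ᵀ * X n + Δ n ω)⁻¹ *ᵥ ((X n)ᵀ *ᵥ y n ω))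
    -- `m_n` and `V_n`: the conditional mean and covariance of `β̂_n − β⁰_n` given `Δ_n`,
    -- so that `‖m_n‖² + tr(V_n)` is the conditional expectation `E‖β̂_n − β⁰_n‖²`
    (m : (n : ℕ) → Ω n → ((g : Fin (G n)) × Fin (pg n g)) → ℝ)
    (hm : ∀ n ω, m n ω = -(((n : ℝ))⁻¹ •
      ((((n : ℝ))⁻¹ • ((X n)ᵀ * X n) + ((n : ℝ))⁻¹ • Δ n ω)⁻¹ *ᵥ (Δ n ω *ᵥ β0 n))))
    (V : (n : ℕ) → Ω n → Matrix ((g : Fin (G n)) × Fin (pg n g)) ((g : Fin (G n)) × Fin (pg n g)) ℝ)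
    (hV : ∀ n ω, V n ω = (σ2 / (n : ℝ)) •
      (((((n : ℝ))⁻¹ • ((X n)ᵀ * X n) + ((n : ℝ))⁻¹ • Δ n ω)⁻¹)
        * (((n : ℝ))⁻¹ • ((X n)ᵀ
            * ((1 : Matrix (Fin n) (Fin n) ℝ) - ((n : ℝ))⁻¹ • Matrix.of fun _ _ => (1 : ℝ))
            * X n))
        * ((((n : ℝ))⁻¹ • ((X n)ᵀ * X n) + ((n : ℝ))⁻¹ • Δ n ω)⁻¹))) :
    -- `E‖β̂_n − β⁰_n‖² = ‖m_n‖² + tr(V_n) = O_p(p_n/n) → 0`, and `‖β̂_n − β⁰_n‖² ≍ p_n/n`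
    IsBigOP P (fun n ω => enorm2 (m n ω) ^ 2 + Matrix.trace (V n ω))
      (fun n => (∑ g, pg n g : ℝ) / (n : ℝ)) ∧
    IsLittleOP P (fun n ω => enorm2 (m n ω) ^ 2 + Matrix.trace (V n ω)) (fun _ => 1) ∧
    IsThetaP P (fun n ω => (enorm2 fun i => βhat n ω i - β0 n i) ^ 2)
      (fun n => (∑ g, pg n g : ℝ) / (n : ℝ)) := by
  exact stmt_4_general Ω P G pg X hXc β0 σ2 hσ2 ε hε y hy hB1a dmin dmax hdmin hB3 hB4 δ hδ0 hδo
    Δ hΔ βhat hβhat m hm V hV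
end

section
/- (Residual variance consistency, used in the proof of Supplementary Lemma 7.) Let X_n ∈ ℝ^{n×p_n} be nonrandom with each column summing to zero and X_n^⊤X_n invertible with p_n = o(n), let y = X_n β⁰_n + ε with ε ~ N(0, σ*²Ψ_n), σ*² > 0, Ψ_n = I_n − (1/n)J_n, and let β̂_LS = (X_n^⊤X_n)^{-1}X_n^⊤y be the least squares estimator. Then |‖y − X_n β̂_LS‖²/(n − p_n) − σ*²| = O_p(n^{-1/2}), i.e. for every γ > 0 there exist ζ_γ and N_γ with P{|‖y − X_n β̂_LS‖²/(n − p_n) − σ*²| > ζ_γ n^{-1/2}} < γ for all n ≥ N_γ. -/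
open MeasureTheory ProbabilityTheory Matrix Filter Asymptotics

/-! The residual of least squares is the projection `(1 - H) ε` of the noise, `H` being the hat
matrix. For a centered Gaussian vector `Z` with covariance `V`, Isserlis' formula gives
`E (‖Z‖² - t)² = (tr V - t)² + 2 tr V²`. Take `V = σ² M (1 - K) M` with `M = 1 - H` and `K = J / n`,
and `t = σ² tr M = σ² (n - p)`. The bias `σ² tr (M K)` is at most `σ²`, as multiplication by a
projection does not increase the trace of a positive semidefinite matrix, and for the same reason
`tr V² ≤ σ² tr V`. So the residual variance has mean square error at most `2 σ⁴ / (n - p)`, and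
Chebyshev's inequality turns this into the rate `n ^ (-1/2)`. -/

section GaussianMoments

lemma iteratedDeriv_succ_affine_mul {g : ℝ → ℝ} {x : ℝ} {n : ℕ} (c d : ℝ)
    (hg : ContDiffAt ℝ (n + 1 : ℕ) g x) :
    iteratedDeriv (n + 1) (fun t ↦ (c + d * t) * g t) x =
      (c + d * x) * iteratedDeriv (n + 1) g x + (n + 1) * d * iteratedDeriv n g x := by
  have h_deriv : deriv (fun t : ℝ ↦ c + d * t) = fun _ ↦ d := by
    funext t
    simp
  have h_high (i : ℕ) : iteratedDeriv (i + 1 + 1) (fun t : ℝ ↦ c + d * t) x = 0 := by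
    simp [iteratedDeriv_succ', h_deriv]
  rw [← Pi.mul_def, iteratedDeriv_mul (by fun_prop) hg, Finset.sum_range_succ',
    Finset.sum_range_succ']
  simp only [h_high, mul_zero, Nat.reduceSubDiff, zero_mul, Finset.sum_const_zero, zero_add,
    Nat.choose_one_right, Nat.cast_add, Nat.cast_one, iteratedDeriv_one, h_deriv,
    add_tsub_cancel_right, Nat.choose_zero_right, iteratedDeriv_zero, one_mul, tsub_zero]
  ring

lemma integral_pow_add_two_gaussianReal (m : ℝ) (v : NNReal) (n : ℕ) :
    ∫ x, x ^ (n + 2) ∂gaussianReal m v =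
      m * ∫ x, x ^ (n + 1) ∂gaussianReal m v + (n + 1) * v * ∫ x, x ^ n ∂gaussianReal m v := by
  have h_moment (k : ℕ) :
      ∫ x, x ^ k ∂gaussianReal m v = iteratedDeriv k (mgf id (gaussianReal m v)) 0 :=
    (iteratedDeriv_mgf_zero (by simp) k).symm
  have h_deriv : deriv (mgf id (gaussianReal m v)) =
      fun t ↦ (m + v * t) * mgf id (gaussianReal m v) t := by
    funext t
    have h_exponent : HasDerivAt (fun t ↦ m * t + v * t ^ 2 / 2) (m + v * t) t :=
      (((hasDerivAt_id t).const_mul m).add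
        ((((hasDerivAt_id t).pow 2).const_mul (v : ℝ)).div_const 2)).congr_deriv (by simp; ring)
    rw [mgf_id_gaussianReal, h_exponent.exp.deriv, mul_comm]
  have h_smooth : ContDiffAt ℝ (n + 1 : ℕ) (mgf id (gaussianReal m v)) 0 := by
    rw [mgf_id_gaussianReal]
    fun_prop
  rw [h_moment, iteratedDeriv_succ', h_deriv, iteratedDeriv_succ_affine_mul m v h_smooth,
    h_moment, h_moment]
  simp

lemma integral_sq_gaussianReal_zero (v : NNReal) : ∫ x, x ^ 2 ∂gaussianReal 0 v = v := by
  simpa using integral_pow_add_two_gaussianReal 0 v 0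

lemma integral_pow_four_gaussianReal_zero (v : NNReal) :
    ∫ x, x ^ 4 ∂gaussianReal 0 v = 3 * (v : ℝ) ^ 2 := by
  rw [integral_pow_add_two_gaussianReal, integral_sq_gaussianReal_zero]
  push_cast
  ring

end GaussianMoments

lemma enorm2_sq {ι : Type*} [Fintype ι] (v : ι → ℝ) : enorm2 v ^ 2 = ∑ i, v i ^ 2 :=
  Real.sq_sqrt (Finset.sum_nonneg fun i _ ↦ sq_nonneg (v i))

lemma integrable_pow_of_even {Ω : Type*} [MeasurableSpace Ω] {P : Measure Ω} {f : Ω → ℝ} {n : ℕ}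
    (hn : Even n) (hn0 : n ≠ 0) (hf : MemLp f n P) : Integrable (fun ω ↦ f ω ^ n) P := by
  simpa [hn.pow_abs] using hf.integrable_norm_pow hn0

lemma integral_sq_mul_sq_eq_polarization {Ω : Type*} [MeasurableSpace Ω] {P : Measure Ω}
    {f g : Ω → ℝ} (hf : MemLp f 4 P) (hg : MemLp g 4 P) :
    ∫ ω, f ω ^ 2 * g ω ^ 2 ∂P =
      (∫ ω, (f ω + g ω) ^ 4 ∂P + ∫ ω, (f ω - g ω) ^ 4 ∂P
        - 2 * ∫ ω, f ω ^ 4 ∂P - 2 * ∫ ω, g ω ^ 4 ∂P) / 12 := by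
  have integrable_pow_four {h : Ω → ℝ} (hh : MemLp h 4 P) : Integrable (fun ω ↦ h ω ^ 4) P :=
    integrable_pow_of_even (n := 4) (by decide) four_ne_zero hh
  have h_add : Integrable (fun ω ↦ (f ω + g ω) ^ 4) P := integrable_pow_four (hf.add hg)
  have h_sub : Integrable (fun ω ↦ (f ω - g ω) ^ 4) P := integrable_pow_four (hf.sub hg)
  have h_f := (integrable_pow_four hf).const_mul 2
  have h_g := (integrable_pow_four hg).const_mul 2
  have h_polarization (ω : Ω) : f ω ^ 2 * g ω ^ 2 =
      ((f ω + g ω) ^ 4 + (f ω - g ω) ^ 4 - 2 * f ω ^ 4 - 2 * g ω ^ 4) / 12 := by ring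
  simp only [h_polarization]
  rw [integral_div, integral_sub (by fun_prop) h_g, integral_sub (by fun_prop) h_f,
    integral_add h_add h_sub, integral_const_mul, integral_const_mul]

namespace IsMvGaussian

variable {Ω ι κ : Type*} [MeasurableSpace Ω] [Fintype ι] {P : Measure Ω}
  {Z : Ω → ι → ℝ} {m : ι → ℝ} {V : Matrix ι ι ℝ}

lemma mulVec [Fintype κ] (hZ : IsMvGaussian P Z m V) (B : Matrix κ ι ℝ) :
    IsMvGaussian P (fun ω ↦ B *ᵥ Z ω) (B *ᵥ m) (B * V * Bᵀ) := fun a ↦ by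
  have h_dotProduct (z : ι → ℝ) : ∑ i, a i * (B *ᵥ z) i = ∑ i, (a ᵥ* B) i * z i :=
    Matrix.dotProduct_mulVec a B z
  simp only [h_dotProduct, hZ (a ᵥ* B)]
  rw [← mulVec_mulVec, ← mulVec_mulVec, mulVec_transpose, Matrix.dotProduct_mulVec a B]

lemma mulVec_of_isSelfAdjoint {B : Matrix ι ι ℝ} (hZ : IsMvGaussian P Z m V)
    (hB : IsSelfAdjoint B) : IsMvGaussian P (fun ω ↦ B *ᵥ Z ω) (B *ᵥ m) (B * V * B) := by
  simpa only [← conjTranspose_eq_transpose_of_trivial, ← star_eq_conjTranspose, hB.star_eq]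
    using hZ.mulVec B

lemma hasLaw_dotProduct (hZ : IsMvGaussian P Z m V) (a : ι → ℝ) :
    HasLaw (fun ω ↦ a ⬝ᵥ Z ω) (gaussianReal (a ⬝ᵥ m) (a ⬝ᵥ V *ᵥ a).toNNReal) P where
  aemeasurable := aemeasurable_of_map_neZero (by
    rw [show P.map (fun ω ↦ a ⬝ᵥ Z ω) = _ from hZ a]
    infer_instance)
  map_eq := hZ a

lemma memLp_dotProduct (hZ : IsMvGaussian P Z m V) (a : ι → ℝ) {q : ENNReal} (hq : q ≠ ⊤) :
    MemLp (fun ω ↦ a ⬝ᵥ Z ω) q P := by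
  have hlaw := hZ.hasLaw_dotProduct a
  have hid := memLp_id_gaussianReal' (μ := a ⬝ᵥ m) (v := (a ⬝ᵥ V *ᵥ a).toNNReal) q hq
  rw [← hlaw.map_eq] at hid
  exact (memLp_map_measure_iff (by fun_prop) hlaw.aemeasurable).1 hid

lemma memLp_dotProduct_sq (hZ : IsMvGaussian P Z m V) (a : ι → ℝ) :
    MemLp (fun ω ↦ (a ⬝ᵥ Z ω) ^ 2) 2 P := by
  have h := hZ.memLp_dotProduct a (q := 4) (by simp)
  refine (memLp_two_iff_integrable_sq (h.1.pow 2)).2 ?_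
  simpa [← pow_mul] using integrable_pow_of_even (n := 4) (by decide) four_ne_zero h

lemma memLp_enorm2_sq (hZ : IsMvGaussian P Z m V) : MemLp (fun ω ↦ enorm2 (Z ω) ^ 2) 2 P := by
  classical
  simp only [enorm2_sq]
  refine memLp_finsetSum _ fun i _ ↦ ?_
  simpa using hZ.memLp_dotProduct_sq (Pi.single i 1)

lemma memLp_enorm2_sq_div_sub [IsFiniteMeasure P] (hZ : IsMvGaussian P Z m V) (d c : ℝ) :
    MemLp (fun ω ↦ enorm2 (Z ω) ^ 2 / d - c) 2 P := by
  simpa only [div_eq_inv_mul, Pi.sub_def] using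
    (hZ.memLp_enorm2_sq.const_mul d⁻¹).sub (memLp_const c)

section Centered

variable (hZ : IsMvGaussian P Z 0 V) (hV : V.PosSemidef)
include hZ hV

lemma integral_dotProduct_sq (a : ι → ℝ) : ∫ ω, (a ⬝ᵥ Z ω) ^ 2 ∂P = a ⬝ᵥ V *ᵥ a := by
  have h_nonneg : 0 ≤ a ⬝ᵥ V *ᵥ a := by simpa using hV.dotProduct_mulVec_nonneg a
  have h := (hZ.hasLaw_dotProduct a).integral_comp (f := (· ^ 2)) (by fun_prop)
  simpa [Function.comp_def, integral_sq_gaussianReal_zero, h_nonneg] using h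

lemma integral_dotProduct_pow_four (a : ι → ℝ) :
    ∫ ω, (a ⬝ᵥ Z ω) ^ 4 ∂P = 3 * (a ⬝ᵥ V *ᵥ a) ^ 2 := by
  have h_nonneg : 0 ≤ a ⬝ᵥ V *ᵥ a := by simpa using hV.dotProduct_mulVec_nonneg a
  have h := (hZ.hasLaw_dotProduct a).integral_comp (f := (· ^ 4)) (by fun_prop)
  simpa [Function.comp_def, integral_pow_four_gaussianReal_zero, h_nonneg] using h

-- Isserlis' formula for a fourth moment: polarization reduces it to fourth moments of `a ± b`.
lemma covariance_dotProduct_sq [IsProbabilityMeasure P] (a b : ι → ℝ) :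
    cov[fun ω ↦ (a ⬝ᵥ Z ω) ^ 2, fun ω ↦ (b ⬝ᵥ Z ω) ^ 2; P] = 2 * (a ⬝ᵥ V *ᵥ b) ^ 2 := by
  have h_symm : b ⬝ᵥ V *ᵥ a = a ⬝ᵥ V *ᵥ b := by
    rw [dotProduct_mulVec, ← mulVec_transpose, ← conjTranspose_eq_transpose_of_trivial,
      hV.isHermitian.eq, dotProduct_comm]
  rw [covariance_eq_sub (hZ.memLp_dotProduct_sq a) (hZ.memLp_dotProduct_sq b)]
  simp only [Pi.mul_apply]
  rw [integral_sq_mul_sq_eq_polarization (hZ.memLp_dotProduct a (by simp))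
    (hZ.memLp_dotProduct b (by simp))]
  simp only [← add_dotProduct, ← sub_dotProduct, hZ.integral_dotProduct_pow_four hV,
    hZ.integral_dotProduct_sq hV]
  simp only [add_dotProduct, sub_dotProduct, mulVec_add, mulVec_sub, dotProduct_add,
    dotProduct_sub, h_symm]
  ring

lemma integral_enorm2_sq : ∫ ω, enorm2 (Z ω) ^ 2 ∂P = V.trace := by
  classical
  have h_coord (i : ι) : ∫ ω, Z ω i ^ 2 ∂P = V i i := by
    simpa using hZ.integral_dotProduct_sq hV (Pi.single i 1)
  have h_int (i : ι) : Integrable (fun ω ↦ Z ω i ^ 2) P := by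
    simpa using (hZ.memLp_dotProduct (Pi.single i 1) (q := 2) (by simp)).integrable_sq
  simp only [enorm2_sq]
  rw [integral_finsetSum _ fun i _ ↦ h_int i]
  simp [h_coord, trace]

lemma variance_enorm2_sq [IsProbabilityMeasure P] :
    Var[fun ω ↦ enorm2 (Z ω) ^ 2; P] = 2 * (V * V).trace := by
  classical
  have h_cov (i j : ι) : cov[fun ω ↦ Z ω i ^ 2, fun ω ↦ Z ω j ^ 2; P] = 2 * V i j ^ 2 := by
    simpa using hZ.covariance_dotProduct_sq hV (Pi.single i 1) (Pi.single j 1)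
  have h_memLp (i : ι) : MemLp (fun ω ↦ Z ω i ^ 2) 2 P := by
    simpa using hZ.memLp_dotProduct_sq (Pi.single i 1)
  have h_symm (i j : ι) : V j i = V i j := by simpa using hV.isHermitian.apply i j
  have h_trace : (V * V).trace = ∑ i, ∑ j, V i j ^ 2 := by
    simp [trace, mul_apply, h_symm, sq]
  simp only [enorm2_sq]
  rw [variance_fun_sum h_memLp, h_trace]
  simp only [h_cov, Finset.mul_sum]

lemma integral_enorm2_sq_sub_sq [IsProbabilityMeasure P] (t : ℝ) :
    ∫ ω, (enorm2 (Z ω) ^ 2 - t) ^ 2 ∂P = (V.trace - t) ^ 2 + 2 * (V * V).trace := by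
  have h_memLp := hZ.memLp_enorm2_sq
  have h_variance := variance_eq_sub (h_memLp.sub (memLp_const t))
  simp only [Pi.sub_def, Pi.pow_apply] at h_variance
  rw [variance_sub_const h_memLp.1, hZ.variance_enorm2_sq hV,
    integral_sub (h_memLp.integrable one_le_two) (integrable_const t), hZ.integral_enorm2_sq hV]
    at h_variance
  simp only [integral_const, probReal_univ, smul_eq_mul, one_mul] at h_variance
  linarith

end Centered
end IsMvGaussian

section Projections

variable {ι R : Type*} [Fintype ι]

lemma trace_mul_mul_of_isIdempotentElem [NonUnitalCommSemiring R] {A B : Matrix ι ι R}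
    (hA : IsIdempotentElem A) : (A * B * A).trace = (A * B).trace := by
  rw [trace_mul_comm (A * B), ← Matrix.mul_assoc, hA.eq]

variable [CommRing R] [PartialOrder R] [StarRing R] {A B : Matrix ι ι R}

lemma posSemidef_mul_mul_of_isSelfAdjoint (hA : IsSelfAdjoint A) (hB : B.PosSemidef) :
    (A * B * A).PosSemidef := by
  simpa only [← star_eq_conjTranspose, hA.star_eq] using hB.mul_mul_conjTranspose_same A

variable [StarOrderedRing R]

lemma posSemidef_of_isStarProjection (hA : IsStarProjection A) : A.PosSemidef := by
  have h_factor : Aᴴ * A = A := by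
    rw [← star_eq_conjTranspose, hA.isSelfAdjoint.star_eq, hA.isIdempotentElem.eq]
  exact h_factor ▸ posSemidef_conjTranspose_mul_self A

lemma trace_mul_nonneg_of_isStarProjection (hA : IsStarProjection A) (hB : B.PosSemidef) :
    0 ≤ (A * B).trace :=
  trace_mul_mul_of_isIdempotentElem hA.isIdempotentElem ▸
    (posSemidef_mul_mul_of_isSelfAdjoint hA.isSelfAdjoint hB).trace_nonneg

lemma trace_mul_le_of_isStarProjection (hA : IsStarProjection A) (hB : B.PosSemidef) :
    (A * B).trace ≤ B.trace := by
  classical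
  have h := trace_mul_nonneg_of_isStarProjection hA.one_sub hB
  rwa [Matrix.sub_mul, Matrix.one_mul, trace_sub, sub_nonneg] at h

lemma trace_mul_mul_mul_self_le_of_isStarProjection (hA : IsStarProjection A)
    (hB : IsStarProjection B) : (A * B * A * (A * B * A)).trace ≤ (A * B).trace :=
  calc (A * B * A * (A * B * A)).trace
    _ = (A * (B * (A * A) * B) * A).trace := by simp only [Matrix.mul_assoc]
    _ = (A * (B * A * B)).trace := by
      rw [hA.isIdempotentElem.eq, trace_mul_mul_of_isIdempotentElem hA.isIdempotentElem]
    _ ≤ (B * A * B).trace := trace_mul_le_of_isStarProjection hA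
      (posSemidef_mul_mul_of_isSelfAdjoint hB.isSelfAdjoint (posSemidef_of_isStarProjection hA))
    _ = (A * B).trace := by
      rw [trace_mul_mul_of_isIdempotentElem hB.isIdempotentElem, trace_mul_comm]

end Projections

section LeastSquares

variable {ι κ R : Type*} [Fintype ι] [Fintype κ] [DecidableEq κ] [CommRing R] {X : Matrix ι κ R}

/-- The hat matrix `X (Xᵀ X)⁻¹ Xᵀ` of a design matrix `X`, which maps the responses to the fitted
values; when `Xᵀ X` is invertible, it is the orthogonal projection onto the column space of `X`. -/
noncomputable def hatMatrix (X : Matrix ι κ R) : Matrix ι ι R := X * (Xᵀ * X)⁻¹ * Xᵀ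

lemma hatMatrix_mul_self (hX : IsUnit (Xᵀ * X)) : hatMatrix X * X = X := by
  rw [hatMatrix, Matrix.mul_assoc, Matrix.mul_assoc,
    nonsing_inv_mul _ ((isUnit_iff_isUnit_det _).1 hX), Matrix.mul_one]

lemma isStarProjection_hatMatrix [StarRing R] [TrivialStar R] (hX : IsUnit (Xᵀ * X)) :
    IsStarProjection (hatMatrix X) where
  isIdempotentElem := by
    change hatMatrix X * (X * (Xᵀ * X)⁻¹ * Xᵀ) = X * (Xᵀ * X)⁻¹ * Xᵀ
    rw [← Matrix.mul_assoc, ← Matrix.mul_assoc, hatMatrix_mul_self hX]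
  isSelfAdjoint := by
    simp [IsSelfAdjoint, star_eq_conjTranspose, hatMatrix, transpose_nonsing_inv, Matrix.mul_assoc]

lemma trace_hatMatrix (hX : IsUnit (Xᵀ * X)) : (hatMatrix X).trace = Fintype.card κ := by
  rw [hatMatrix, trace_mul_comm, ← Matrix.mul_assoc,
    mul_nonsing_inv _ ((isUnit_iff_isUnit_det _).1 hX), trace_one]

lemma leastSquares_residual_eq [DecidableEq ι] (hX : IsUnit (Xᵀ * X)) (β : κ → R) (e : ι → R) :
    X *ᵥ β + e - X *ᵥ ((Xᵀ * X)⁻¹ *ᵥ (Xᵀ *ᵥ (X *ᵥ β + e))) = (1 - hatMatrix X) *ᵥ e := by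
  have h_fit (z : ι → R) : X *ᵥ ((Xᵀ * X)⁻¹ *ᵥ (Xᵀ *ᵥ z)) = hatMatrix X *ᵥ z := by
    rw [mulVec_mulVec, mulVec_mulVec, hatMatrix, Matrix.mul_assoc]
  rw [h_fit, mulVec_add, mulVec_mulVec, hatMatrix_mul_self hX, sub_mulVec, one_mulVec,
    add_sub_add_left_eq_sub]

end LeastSquares

section Averaging

variable (ι : Type*) [Fintype ι]

/-- The matrix `J / n` of order `n = |ι|`, which replaces every coordinate of a vector by the mean
of its coordinates; the centering matrix `Ψ` is `1 - averagingMatrix ι`. -/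
noncomputable def averagingMatrix : Matrix ι ι ℝ :=
  (Fintype.card ι : ℝ)⁻¹ • Matrix.of fun _ _ ↦ 1

lemma isStarProjection_averagingMatrix : IsStarProjection (averagingMatrix ι) where
  isIdempotentElem := by
    ext i j
    have : Nonempty ι := ⟨i⟩
    simp [averagingMatrix, mul_apply]
  isSelfAdjoint := by
    ext i j
    simp [averagingMatrix]

lemma trace_averagingMatrix_le_one : (averagingMatrix ι).trace ≤ 1 := by
  simpa [averagingMatrix, trace] using mul_inv_le_one (a := (Fintype.card ι : ℝ))

end Averaging

section ResidualMoments

variable {Ω ι : Type*} [MeasurableSpace Ω] [Fintype ι] [DecidableEq ι] {P : Measure Ω}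
  [IsProbabilityMeasure P] {M K : Matrix ι ι ℝ} {σ2 : ℝ} {ε : Ω → ι → ℝ}

lemma IsMvGaussian.integral_enorm2_mulVec_sq_sub_sq_le (hM : IsStarProjection M)
    (hK : IsStarProjection K) (hK_trace : K.trace ≤ 2) (hσ2 : 0 ≤ σ2)
    (hε : IsMvGaussian P ε 0 (σ2 • (1 - K))) :
    ∫ ω, (enorm2 (M *ᵥ ε ω) ^ 2 - σ2 * M.trace) ^ 2 ∂P ≤ 2 * σ2 ^ 2 * M.trace := by
  set V := M * (1 - K) * M with hV
  have h_posSemidef : V.PosSemidef := posSemidef_mul_mul_of_isSelfAdjoint hM.isSelfAdjoint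
    (posSemidef_of_isStarProjection hK.one_sub)
  have h_trace : V.trace = M.trace - (M * K).trace := by
    rw [hV, trace_mul_mul_of_isIdempotentElem hM.isIdempotentElem, Matrix.mul_sub, Matrix.mul_one,
      trace_sub]
  have h_trace_sq : (V * V).trace ≤ M.trace - (M * K).trace := by
    rw [← h_trace, hV, trace_mul_mul_of_isIdempotentElem hM.isIdempotentElem]
    exact trace_mul_mul_mul_self_le_of_isStarProjection hM hK.one_sub
  have hK_posSemidef := posSemidef_of_isStarProjection hK
  have h_bias_nonneg : 0 ≤ (M * K).trace := trace_mul_nonneg_of_isStarProjection hM hK_posSemidef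
  have h_bias_le : (M * K).trace ≤ 2 :=
    (trace_mul_le_of_isStarProjection hM hK_posSemidef).trans hK_trace
  have h_gaussian : IsMvGaussian P (fun ω ↦ M *ᵥ ε ω) 0 (σ2 • V) := by
    simpa only [hV, mulVec_zero, Matrix.mul_smul, Matrix.smul_mul] using
      hε.mulVec_of_isSelfAdjoint hM.isSelfAdjoint
  calc ∫ ω, (enorm2 (M *ᵥ ε ω) ^ 2 - σ2 * M.trace) ^ 2 ∂P
    _ = (σ2 * (M.trace - (M * K).trace) - σ2 * M.trace) ^ 2 + 2 * (σ2 ^ 2 * (V * V).trace) := by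
      rw [h_gaussian.integral_enorm2_sq_sub_sq (h_posSemidef.smul hσ2), Matrix.mul_smul,
        Matrix.smul_mul, trace_smul, trace_smul, trace_smul, h_trace]
      simp only [smul_eq_mul]
      ring
    _ = σ2 ^ 2 * ((M * K).trace * (M * K).trace + 2 * (V * V).trace) := by ring
    _ ≤ σ2 ^ 2 * (2 * (M * K).trace + 2 * (M.trace - (M * K).trace)) := by gcongr
    _ = 2 * σ2 ^ 2 * M.trace := by ring

variable {κ : Type*} [Fintype κ] [DecidableEq κ] {X : Matrix ι κ ℝ}

lemma IsMvGaussian.integral_residualVariance_sub_sq_le (hX : IsUnit (Xᵀ * X))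
    (hcard : Fintype.card κ < Fintype.card ι) (hK : IsStarProjection K) (hK_trace : K.trace ≤ 2)
    (hσ2 : 0 ≤ σ2) (hε : IsMvGaussian P ε 0 (σ2 • (1 - K))) :
    ∫ ω, (enorm2 ((1 - hatMatrix X) *ᵥ ε ω) ^ 2 / ((Fintype.card ι : ℝ) - Fintype.card κ)
      - σ2) ^ 2 ∂P ≤ 2 * σ2 ^ 2 / ((Fintype.card ι : ℝ) - Fintype.card κ) := by
  set d : ℝ := (Fintype.card ι : ℝ) - Fintype.card κ with hd
  have hd_pos : 0 < d := sub_pos.2 (Nat.cast_lt.2 hcard)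
  have h_trace : (1 - hatMatrix X).trace = d := by
    rw [trace_sub, trace_one, trace_hatMatrix hX, hd]
  have h_scale (r : ℝ) : (r / d - σ2) ^ 2 = (r - σ2 * d) ^ 2 / d ^ 2 := by field_simp
  simp only [h_scale]
  rw [integral_div, div_le_iff₀ (by positivity)]
  calc ∫ ω, (enorm2 ((1 - hatMatrix X) *ᵥ ε ω) ^ 2 - σ2 * d) ^ 2 ∂P
    _ ≤ 2 * σ2 ^ 2 * d := h_trace ▸ hε.integral_enorm2_mulVec_sq_sub_sq_le
      (isStarProjection_hatMatrix hX).one_sub hK hK_trace hσ2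
    _ = 2 * σ2 ^ 2 / d * d ^ 2 := by field_simp

end ResidualMoments

section BigOP

variable {Ω : ℕ → Type*} [∀ n, MeasurableSpace (Ω n)] {P : (n : ℕ) → Measure (Ω n)}
  {A : (n : ℕ) → Ω n → ℝ} {B : ℕ → ℝ}

lemma IsBigOP.abs (h : IsBigOP P A B) : IsBigOP P (fun n ω ↦ |A n ω|) B := by
  simpa only [IsBigOP, abs_abs] using h

lemma measureReal_lt_abs_le_integral_sq_div {α : Type*} [MeasurableSpace α] {μ : Measure α}
    [IsFiniteMeasure μ] {f : α → ℝ} (hf : MemLp f 2 μ) {t : ℝ} (ht : 0 < t) :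
    μ.real {x | t < |f x|} ≤ (∫ x, f x ^ 2 ∂μ) / t ^ 2 := by
  have h_subset : {x | t < |f x|} ⊆ {x | t ^ 2 ≤ f x ^ 2} := fun x hx ↦
    sq_le_sq.2 ((abs_of_pos ht).trans_le hx.le)
  rw [le_div_iff₀' (by positivity)]
  calc t ^ 2 * μ.real {x | t < |f x|}
    _ ≤ t ^ 2 * μ.real {x | t ^ 2 ≤ f x ^ 2} :=
      mul_le_mul_of_nonneg_left (measureReal_mono h_subset) (sq_nonneg t)
    _ ≤ ∫ x, f x ^ 2 ∂μ := mul_meas_ge_le_integral_of_nonneg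
      (.of_forall fun x ↦ sq_nonneg (f x)) hf.integrable_sq (t ^ 2)

lemma IsBigOP.of_integral_sq_le [∀ n, IsFiniteMeasure (P n)] {C : ℝ}
    (hB : ∀ᶠ n in atTop, 0 < B n) (hA : ∀ᶠ n in atTop, MemLp (A n) 2 (P n))
    (hAB : ∀ᶠ n in atTop, ∫ ω, A n ω ^ 2 ∂P n ≤ C * B n ^ 2) : IsBigOP P A B := by
  intro γ hγ
  obtain ⟨ζ, hζ_large, hζ⟩ := (((tendsto_pow_atTop two_ne_zero).eventually_gt_atTop (C / γ)).and
    (eventually_gt_atTop (0 : ℝ))).exists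
  refine ⟨ζ, hζ, eventually_atTop.1 ?_⟩
  filter_upwards [hB, hA, hAB] with n hBn hAn hABn
  calc (P n).real {ω | ζ * B n < |A n ω|}
    _ ≤ (∫ ω, A n ω ^ 2 ∂P n) / (ζ * B n) ^ 2 :=
      measureReal_lt_abs_le_integral_sq_div hAn (by positivity)
    _ ≤ C * B n ^ 2 / (ζ * B n) ^ 2 := by gcongr
    _ = C / ζ ^ 2 := by field_simp
    _ < γ := (div_lt_comm₀ (by positivity) hγ).2 hζ_large

end BigOP

theorem stmt_18_general {Ω : ℕ → Type*} [∀ n, MeasurableSpace (Ω n)]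
    {P : (n : ℕ) → Measure (Ω n)} [∀ n, IsProbabilityMeasure (P n)]
    {p : ℕ → ℕ} {X : (n : ℕ) → Matrix (Fin n) (Fin (p n)) ℝ}
    (hXinv : ∀ n, IsUnit ((X n)ᵀ * X n))
    {c : ℝ} (hc : c < 1) (hp : ∀ᶠ n : ℕ in atTop, (p n : ℝ) ≤ c * n)
    {β0 : (n : ℕ) → Fin (p n) → ℝ} {σ2 : ℝ} (hσ2 : 0 ≤ σ2) {ε : (n : ℕ) → Ω n → Fin n → ℝ}
    (hε : ∀ n, IsMvGaussian (P n) (ε n) 0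
      (σ2 • ((1 : Matrix (Fin n) (Fin n) ℝ) - (n : ℝ)⁻¹ • Matrix.of fun _ _ ↦ (1 : ℝ))))
    {y : (n : ℕ) → Ω n → Fin n → ℝ} (hy : ∀ n ω, y n ω = X n *ᵥ β0 n + ε n ω)
    {βLS : (n : ℕ) → Ω n → Fin (p n) → ℝ}
    (hβLS : ∀ n ω, βLS n ω = ((X n)ᵀ * X n)⁻¹ *ᵥ ((X n)ᵀ *ᵥ y n ω)) :
    IsBigOP P (fun n ω ↦
        |(enorm2 fun i ↦ y n ω i - (X n *ᵥ βLS n ω) i) ^ 2 / ((n : ℝ) - (p n : ℝ)) - σ2|)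
      fun n ↦ (Real.sqrt (n : ℝ))⁻¹ := by
  have hε' (n : ℕ) : IsMvGaussian (P n) (ε n) 0 (σ2 • (1 - averagingMatrix (Fin n))) := by
    simpa only [averagingMatrix, Fintype.card_fin] using hε n
  have h_residual (n : ℕ) (ω : Ω n) :
      (fun i ↦ y n ω i - (X n *ᵥ βLS n ω) i) = (1 - hatMatrix (X n)) *ᵥ ε n ω := by
    rw [← leastSquares_residual_eq (hXinv n), ← hy, ← hβLS, Pi.sub_def]
  simp only [h_residual]
  refine (IsBigOP.of_integral_sq_le (C := 2 * σ2 ^ 2 / (1 - c)) ?_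
    (.of_forall fun n ↦ ((hε n).mulVec _).memLp_enorm2_sq_div_sub _ _) ?_).abs
  · filter_upwards [eventually_gt_atTop 0] with n hn
    positivity
  · filter_upwards [hp, eventually_gt_atTop 0] with n hpn hn
    have hc' : 0 < 1 - c := sub_pos.2 hc
    have h_dof_pos : 0 < (1 - c) * (n : ℝ) := by positivity
    have h_dof : (1 - c) * n ≤ (n : ℝ) - p n := by linarith
    have h_card : p n < n := by exact_mod_cast sub_pos.1 (h_dof_pos.trans_le h_dof)
    calc _ ≤ 2 * σ2 ^ 2 / ((n : ℝ) - p n) := by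
          simpa only [Fintype.card_fin] using (hε' n).integral_residualVariance_sub_sq_le
            (hXinv n) (by simpa using h_card) (isStarProjection_averagingMatrix _)
            ((trace_averagingMatrix_le_one _).trans one_le_two) hσ2
      _ ≤ 2 * σ2 ^ 2 / ((1 - c) * n) := by gcongr
      _ = 2 * σ2 ^ 2 / (1 - c) * (Real.sqrt n)⁻¹ ^ 2 := by
          rw [inv_pow, Real.sq_sqrt n.cast_nonneg]
          field_simp

open MeasureTheory ProbabilityTheory Matrix Filter Asymptotics in
/-- Residual variance consistency (used in the proof of Supplementary Lemma 7):
`|‖y − Xβ̂_LS‖²/(n − p_n) − σ*²| = O_p(n^{-1/2})`. -/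
theorem stmt_18
    (Ω : ℕ → Type) [∀ n, MeasurableSpace (Ω n)]
    (P : (n : ℕ) → Measure (Ω n)) [∀ n, IsProbabilityMeasure (P n)]
    (p : ℕ → ℕ)
    (X : (n : ℕ) → Matrix (Fin n) (Fin (p n)) ℝ)
    (hXc : ∀ n j, ∑ i, X n i j = 0)
    (hXinv : ∀ n, IsUnit ((X n)ᵀ * X n))
    (hp : (fun n => (p n : ℝ)) =o[atTop] fun n => (n : ℝ))
    (β0 : (n : ℕ) → Fin (p n) → ℝ)
    (σ2 : ℝ) (hσ2 : 0 < σ2)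
    (ε : (n : ℕ) → Ω n → Fin n → ℝ)
    (hε : ∀ n, IsMvGaussian (P n) (ε n) 0
      (σ2 • ((1 : Matrix (Fin n) (Fin n) ℝ) - ((n : ℝ))⁻¹ • Matrix.of fun _ _ => (1 : ℝ))))
    (y : (n : ℕ) → Ω n → Fin n → ℝ) (hy : ∀ n ω, y n ω = X n *ᵥ β0 n + ε n ω)
    (βLS : (n : ℕ) → Ω n → Fin (p n) → ℝ)
    (hβLS : ∀ n ω, βLS n ω = ((X n)ᵀ * X n)⁻¹ *ᵥ ((X n)ᵀ *ᵥ y n ω)) :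
    IsBigOP P (fun n ω =>
        |(enorm2 fun i => y n ω i - (X n *ᵥ βLS n ω) i) ^ 2 / ((n : ℝ) - (p n : ℝ)) - σ2|)
      fun n => (Real.sqrt (n : ℝ))⁻¹ := by
  exact stmt_18_general hXinv one_half_lt_one
    ((hp.def one_half_pos).mono fun n h ↦ by simpa using h) hσ2.le hε hy hβLS
end
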